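/- Let λ be an n-partition and π an n-permutation. Then d_λ(π;x) = Σ c_λ(π′;x), where the sum runs over all π′ ∈ S_n^λ such that Y_λ(π′) ≤ Y_λ(π) entrywise. In particular s_λ(x) = Σ_{π′ ∈ S_n^λ} c_λ(π′;x). -/

import Mathlib

/-
Common combinatorial set-up for "Tableaux for Key Polynomials, Demazure
Characters, and Atoms" (Proctor–Willis).

Conventions: a box `(j, i)` means column `j`, row `i`, both 1-indexed.
Partial (remnant) tableaux are encoded by their column-length functions
`c : ℕ → ℕ` (each column of a remnant is a top segment of the original
column), together with the ambient value function `T : ℕ → ℕ → ℕ`.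
-/

open scoped BigOperators Classical

noncomputable section

namespace KeyPoly

open MvPolynomial

/-- An `n`-partition `λ = (λ_1, …, λ_n)` with `λ_1 ≥ … ≥ λ_n ≥ 0`,
recorded as a function on `1, …, n`, vanishing beyond `n`. -/
structure NPartition (n : ℕ) where
  part : ℕ → ℕ
  antitone : ∀ ⦃i j : ℕ⦄, 1 ≤ i → i ≤ j → part j ≤ part i
  outside : ∀ i : ℕ, n < i → part i = 0

variable {n : ℕ}

/-- The column length `ζ_j` of the Young diagram of `λ`. -/
def zeta (lam : NPartition n) (j : ℕ) : ℕ :=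
  ((Finset.Icc 1 n).filter fun i => j ≤ lam.part i).card

/-- The box `(j,i)` (column `j`, row `i`) belongs to the diagram of `λ`. -/
def InShape (lam : NPartition n) (j i : ℕ) : Prop :=
  1 ≤ j ∧ 1 ≤ i ∧ i ≤ n ∧ j ≤ lam.part i

/-- The boxes of the diagram of `λ`, as a finite set of pairs (column, row). -/
def boxes (lam : NPartition n) : Finset (ℕ × ℕ) :=
  (Finset.Icc 1 (lam.part 1) ×ˢ Finset.Icc 1 n).filter fun b => b.1 ≤ lam.part b.2

/-- `T` is a semistandard tableau of shape `λ` with values in `[1,n]`: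
rows weakly increase eastward, columns strictly increase southward. -/
def IsSSYT (lam : NPartition n) (T : ℕ → ℕ → ℕ) : Prop :=
  (∀ j i, InShape lam j i → 1 ≤ T j i ∧ T j i ≤ n) ∧
  (∀ j i, InShape lam (j + 1) i → T j i ≤ T (j + 1) i) ∧
  (∀ j i, InShape lam j (i + 1) → T j i < T j (i + 1))

/-- Normalization: the filling vanishes outside the shape. -/
def ZeroOutside (lam : NPartition n) (T : ℕ → ℕ → ℕ) : Prop :=
  ∀ j i, ¬ InShape lam j i → T j i = 0

/-- `T(l, k+1)`, with the boundary convention `n+1` when `k = ζ_l`. -/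
def south (lam : NPartition n) (T : ℕ → ℕ → ℕ) (l k : ℕ) : ℕ :=
  if InShape lam l (k + 1) then T l (k + 1) else n + 1

/-- `T(l+1, k)`, with the boundary convention `n` when `l = λ_k`. -/
def east (lam : NPartition n) (T : ℕ → ℕ → ℕ) (l k : ℕ) : ℕ :=
  if InShape lam (l + 1) k then T (l + 1) k else n

/-- An `n`-permutation: a tuple `(p 1, …, p n)` of distinct entries from `[1,n]`. -/
def IsNPerm (n : ℕ) (p : ℕ → ℕ) : Prop :=
  Set.BijOn p (Set.Icc 1 n) (Set.Icc 1 n)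

/-- The `λ`-key `Y_λ(π)`: column `j` is `π_1, …, π_{ζ_j}` sorted increasingly
(from top to bottom); zero outside the shape. -/
def keyTab (lam : NPartition n) (p : ℕ → ℕ) (j i : ℕ) : ℕ :=
  if InShape lam j i then
    (((Finset.Icc 1 (zeta lam j)).image p).sort (· ≤ ·)).getD (i - 1) 0
  else 0

/-- A semistandard `T` is a key if the values of each column contain the
values of every column to its east. -/
def colSet (lam : NPartition n) (T : ℕ → ℕ → ℕ) (j : ℕ) : Finset ℕ :=
  (Finset.Icc 1 (zeta lam j)).image (T j)

def IsKey (lam : NPartition n) (T : ℕ → ℕ → ℕ) : Prop :=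
  ∀ j j' : ℕ, 1 ≤ j → j ≤ j' → j' ≤ lam.part 1 → colSet lam T j' ⊆ colSet lam T j

/-! ### The (right) scanning method -/

/-- The next column of the scanning path: the earliest column `h' > h`
(up to `maxCol`) whose column bottom in the remnant `c` is nonempty and has
value weakly larger than the bottom value of column `h`. -/
def nextCol (T : ℕ → ℕ → ℕ) (c : ℕ → ℕ) (maxCol h : ℕ) : Option ℕ :=
  (List.range' (h + 1) (maxCol - h)).find?
    (fun h' => decide (0 < c h' ∧ T h (c h) ≤ T h' (c h')))

/-- Columns of the scanning path (EWIS of column bottoms) starting at column `h`,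
with explicit fuel. -/
def pathColsAux (T : ℕ → ℕ → ℕ) (c : ℕ → ℕ) (maxCol : ℕ) : ℕ → ℕ → List ℕ
  | 0, h => [h]
  | fuel + 1, h =>
    match nextCol T c maxCol h with
    | none => [h]
    | some h' => h :: pathColsAux T c maxCol fuel h'

/-- Columns of the scanning path starting at the bottom of column `j` of the
remnant with column lengths `c`. -/
def pathCols (T : ℕ → ℕ → ℕ) (c : ℕ → ℕ) (maxCol j : ℕ) : List ℕ :=
  pathColsAux T c maxCol maxCol j

/-- Remove the scanning path starting in column `j` from the remnant `c`. -/
def removePath (T : ℕ → ℕ → ℕ) (c : ℕ → ℕ) (maxCol j : ℕ) : ℕ → ℕ :=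
  fun h => if h ∈ pathCols T c maxCol j then c h - 1 else c h

/-- Iterate path removal `r` times, always starting from column `j`. -/
def remnantIter (T : ℕ → ℕ → ℕ) (c0 : ℕ → ℕ) (maxCol j : ℕ) : ℕ → ℕ → ℕ
  | 0 => c0
  | r + 1 => removePath T (remnantIter T c0 maxCol j r) maxCol j

/-- Column lengths of the remnant tableau `T^{(j;i)}`. -/
def remnant (lam : NPartition n) (T : ℕ → ℕ → ℕ) (j i : ℕ) : ℕ → ℕ :=
  remnantIter T (zeta lam) (lam.part 1) j (zeta lam j - i)

/-- The scanning path `P(T; j, i)`, recorded by its list of columns. -/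
def scanPath (lam : NPartition n) (T : ℕ → ℕ → ℕ) (j i : ℕ) : List ℕ :=
  pathCols T (remnant lam T j i) (lam.part 1) j

/-- The scanning value `S(T; j, i)`: the last value of the EWIS from `(j,i)`. -/
def scanValue (lam : NPartition n) (T : ℕ → ℕ → ℕ) (j i : ℕ) : ℕ :=
  T ((scanPath lam T j i).getLastD j)
    (remnant lam T j i ((scanPath lam T j i).getLastD j))

/-- The box `(l,k)` lies on the scanning path `P(T; j, i)`. -/
def InScanPath (lam : NPartition n) (T : ℕ → ℕ → ℕ) (j i l k : ℕ) : Prop :=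
  l ∈ scanPath lam T j i ∧ k = remnant lam T j i l

/-- `m(U)` where `U` is the remnant with column lengths `c` restricted to the
columns `l+1, …, maxCol`:  the maximum of the column-bottom values, with the
convention `m((())) = 1` for the empty tableau. -/
def mEast (T : ℕ → ℕ → ℕ) (c : ℕ → ℕ) (maxCol l : ℕ) : ℕ :=
  max 1 (((Finset.Icc (l + 1) maxCol).filter fun h => 0 < c h).sup fun h => T h (c h))

/-! ### The condition sets A, C, and B -/

/-- The set `A_λ(T, π; l, k)`. -/
def Aset (lam : NPartition n) (T : ℕ → ℕ → ℕ) (p : ℕ → ℕ) (l k : ℕ) : Set ℕ :=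
  if keyTab lam p l k < mEast T (remnant lam T l k) (lam.part 1) l then (∅ : Set ℕ)
  else Set.Icc k (min (keyTab lam p l k) (min (south lam T l k - 1) (east lam T l k)))

/-- The set `C_λ(T, π; l, k)`. -/
def Cset (lam : NPartition n) (T : ℕ → ℕ → ℕ) (p : ℕ → ℕ) (l k : ℕ) : Set ℕ :=
  if l = lam.part 1 then {keyTab lam p l k}
  else if keyTab lam p l k < mEast T (remnant lam T l k) (lam.part 1) l then (∅ : Set ℕ)
  else if mEast T (remnant lam T l k) (lam.part 1) l = keyTab lam p l k then
    Set.Icc k (min (keyTab lam p l k) (min (south lam T l k - 1) (east lam T l k)))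
  else {keyTab lam p l k} ∩ Set.Icc k (min (south lam T l k - 1) (east lam T l k))

/-- The row index `a(l,k;j)`:  the `i` with `(l-1,k) ∈ P(T;j,i)`
(convention `a(l,k;l) = k`). -/
def aIdx (lam : NPartition n) (T : ℕ → ℕ → ℕ) (l k j : ℕ) : ℕ :=
  if j = l then k
  else ((Finset.Icc 1 (zeta lam j)).filter fun i => InScanPath lam T j i (l - 1) k).sup id

/-- The row index `b(l,k;j)`:  the `i` with `(l,k+1) ∈ P(T;j,i)` when `k < ζ_l`,
and `ζ_j + 1` when `k = ζ_l` (convention `b(l,k;l) = k+1`). -/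
def bIdx (lam : NPartition n) (T : ℕ → ℕ → ℕ) (l k j : ℕ) : ℕ :=
  if j = l then k + 1
  else if k = zeta lam l then zeta lam j + 1
  else ((Finset.Icc 1 (zeta lam j)).filter fun i => InScanPath lam T j i l (k + 1)).sup id

/-- `E(l,k;j,i)`:  the value of `T` at the box `(h,m)` of `P(T;j,i)` with `h < l`
maximal (convention `E(l,k;l,k) = k`). -/
def Epath (lam : NPartition n) (T : ℕ → ℕ → ℕ) (l k j i : ℕ) : ℕ :=
  if j = l then k
  else
    T (((scanPath lam T j i).filter fun h => decide (h < l)).foldr max 0)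
      (remnant lam T j i (((scanPath lam T j i).filter fun h => decide (h < l)).foldr max 0))

/-- The set `B_λ(T, π; l, k) = ⋂_{j=1}^{l} ⋃_{i=a(j)}^{b(j)-1} [E(l,k;j,i), Y_λ(π)(j,i)]`. -/
def Bset (lam : NPartition n) (T : ℕ → ℕ → ℕ) (p : ℕ → ℕ) (l k : ℕ) : Set ℕ :=
  {v | ∀ j, 1 ≤ j → j ≤ l →
    ∃ i, aIdx lam T l k j ≤ i ∧ i + 1 ≤ bIdx lam T l k j ∧
      Epath lam T l k j i ≤ v ∧ v ≤ keyTab lam p j i}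

/-! ### The left scanning method -/

/-- The largest row `r ≤ c j` of column `j` whose value is at most `x`. -/
def maxRow (T : ℕ → ℕ → ℕ) (c : ℕ → ℕ) (j x : ℕ) : ℕ :=
  ((Finset.Icc 1 (c j)).filter fun r => T j r ≤ x).sup id

/-- The rows of the maximizing weakly decreasing sequence through columns
`j, j-1, …, 1` with initial bound `x`, in a remnant with column lengths `c`. -/
def leftRows (T : ℕ → ℕ → ℕ) (c : ℕ → ℕ) : ℕ → ℕ → List ℕ
  | 0, _ => []
  | j + 1, x => maxRow T c (j + 1) x :: leftRows T c j (T (j + 1) (maxRow T c (j + 1) x))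

/-- The column-1 value at the end of the left scanning path originating at `(j, r)`. -/
def leftEndVal (T : ℕ → ℕ → ℕ) (c : ℕ → ℕ) (j r : ℕ) : ℕ :=
  T 1 ((leftRows T c j (T j r)).getLastD 0)

/-- Remove the left scanning path originating at `(l, c l)`, together with
all values beneath it, from the remnant `c`. -/
def leftRemovePath (T : ℕ → ℕ → ℕ) (c : ℕ → ℕ) (l : ℕ) : ℕ → ℕ :=
  fun j =>
    if 1 ≤ j ∧ j ≤ l then (leftRows T c l (T l (c l))).getD (l - j) 0 - 1 else c j

/-- Iterate left-path removal `r` times (always for column `l`). -/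
def leftRemnantIter (T : ℕ → ℕ → ℕ) (c0 : ℕ → ℕ) (l : ℕ) : ℕ → ℕ → ℕ
  | 0 => c0
  | r + 1 => leftRemovePath T (leftRemnantIter T c0 l r) l

/-- Column lengths of the left remnant used to compute `M(T; l, i)`:
`T` restricted to its first `l` columns with the left scanning paths
originating at `(l, ζ_l), …, (l, i+1)` (and everything beneath them) removed. -/
def leftRemnant (lam : NPartition n) (T : ℕ → ℕ → ℕ) (l i : ℕ) : ℕ → ℕ :=
  leftRemnantIter T (zeta lam) l (zeta lam l - i)

/-- The left scanning value `M(T; l, i)`. -/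
def leftScanValue (lam : NPartition n) (T : ℕ → ℕ → ℕ) (l i : ℕ) : ℕ :=
  leftEndVal T (leftRemnant lam T l i) l i

/-! ### The condition sets F and G -/

/-- The set `F_λ(T, σ; l, k)`. -/
def Fset (lam : NPartition n) (T : ℕ → ℕ → ℕ) (sg : ℕ → ℕ) (l k : ℕ) : Set ℕ :=
  if l = 1 then Set.Icc (keyTab lam sg 1 k) (south lam T 1 k - 1)
  else
    let U := leftRemnant lam T l k
    let q := maxRow T U (l - 1) (south lam T l k - 1)
    let P := (Finset.Icc 1 q).filter fun h => keyTab lam sg l k ≤ leftEndVal T U (l - 1) h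
    if hP : P.Nonempty then Set.Icc (T (l - 1) (P.min' hP)) (south lam T l k - 1)
    else (∅ : Set ℕ)

/-- The set `G_λ(T, σ; l, k)`. -/
def Gset (lam : NPartition n) (T : ℕ → ℕ → ℕ) (sg : ℕ → ℕ) (l k : ℕ) : Set ℕ :=
  if l = 1 then {keyTab lam sg 1 k}
  else
    let U := leftRemnant lam T l k
    let q := maxRow T U (l - 1) (south lam T l k - 1)
    let P := (Finset.Icc 1 q).filter fun h => leftEndVal T U (l - 1) h = keyTab lam sg l k
    if hP : P.Nonempty then
      Set.Icc (T (l - 1) (P.min' hP))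
        (min ((if P.max' hP + 1 ≤ U (l - 1) then T (l - 1) (P.max' hP + 1) else n + 1) - 1)
          (south lam T l k - 1))
    else (∅ : Set ℕ)

/-! ### Polynomials, divided differences, words -/

/-- Polynomials in the variables `X 1, …, X n` (indexed by `ℕ`) over `ℚ`. -/
abbrev Poly : Type := MvPolynomial ℕ ℚ

/-- The action of `s_i` on polynomials: interchange `x_i` and `x_{i+1}`. -/
def sOp (i : ℕ) (P : Poly) : Poly := rename (Equiv.swap i (i + 1)) P

/-- The divided difference operator
`ρ_i = (x_i - x_{i+1})⁻¹ ∘ (1 - s_i) ∘ x_i`, defined as the unique polynomial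
`Q` with `(x_i - x_{i+1}) Q = x_i P - s_i (x_i P)`. -/
def rhoOp (i : ℕ) (P : Poly) : Poly :=
  if h : ∃ Q : Poly, (X i - X (i + 1)) * Q = X i * P - sOp i (X i * P) then h.choose
  else 0

/-- The operator `ρ̄_i := ρ_i - 1`. -/
def rhoBarOp (i : ℕ) (P : Poly) : Poly := rhoOp i P - P

/-- Apply operators indexed by a word `[i_t, …, i_1]`, rightmost first:
`applyOps f [i_t, …, i_1] P = f i_t (⋯ (f i_1 P))`. -/
def applyOps (f : ℕ → Poly → Poly) : List ℕ → Poly → Poly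
  | [], P => P
  | i :: w, P => f i (applyOps f w P)

/-- The monomial `x_1^{λ_1} ⋯ x_n^{λ_n}`. -/
def lamMonomial (lam : NPartition n) : Poly :=
  ∏ i ∈ Finset.Icc 1 n, X i ^ lam.part i

/-- The weight monomial `x^T = ∏ x_i^{c_i}` of the filling `T`. -/
def weight (lam : NPartition n) (T : ℕ → ℕ → ℕ) : Poly :=
  ∏ b ∈ boxes lam, X (T b.1 b.2)

/-- The simple reflection `s_i` acting by value. -/
def swapVal (i v : ℕ) : ℕ := if v = i then i + 1 else if v = i + 1 then i else v

/-- The permutation `s_{i_t} ⋯ s_{i_1}.(1, 2, …, n)` obtained by applying the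
word `w = [i_t, …, i_1]` (rightmost letter first, each acting by value) to the
identity. -/
def permOfWord (w : List ℕ) : ℕ → ℕ := w.foldr (fun i f => swapVal i ∘ f) id

/-- `w` is a word in letters `s_1, …, s_{n-1}` producing `π` from `(1, …, n)`. -/
def WordFor (n : ℕ) (w : List ℕ) (p : ℕ → ℕ) : Prop :=
  (∀ i ∈ w, 1 ≤ i ∧ i + 1 ≤ n) ∧ ∀ t, 1 ≤ t → t ≤ n → permOfWord w t = p t

/-- `w` is a reduced word for `π`: it produces `π` with minimal length. -/
def IsReducedWord (n : ℕ) (w : List ℕ) (p : ℕ → ℕ) : Prop :=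
  WordFor n w p ∧ ∀ w' : List ℕ, WordFor n w' p → w.length ≤ w'.length

/-- The atom `c_λ(π;x) = ρ̄_{i_t} ⋯ ρ̄_{i_1} . x_1^{λ_1} ⋯ x_n^{λ_n}`, computed
from a choice of reduced word for `π` (it is independent of this choice). -/
def atomPoly (lam : NPartition n) (p : ℕ → ℕ) : Poly :=
  if h : ∃ w : List ℕ, IsReducedWord n w p then
    applyOps rhoBarOp h.choose (lamMonomial lam)
  else 0

/-! ### `S_n^λ` -/

/-- The set `Q_λ` of distinct column lengths of `λ`. -/
def Qset (lam : NPartition n) : Finset ℕ := (Finset.Icc 1 (lam.part 1)).image (zeta lam)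

/-- `π ∈ S_n^λ`: an `n`-permutation increasing on each block `[q_{r-1}+1, q_r]`
cut out by the column lengths of `λ` (equivalently, `π_i < π_j` whenever
`i < j` and no element of `Q_λ` lies in `[i, j)`). -/
def InSnLam (lam : NPartition n) (p : ℕ → ℕ) : Prop :=
  IsNPerm n p ∧ ∀ i j, 1 ≤ i → i < j → j ≤ n →
    (∀ q ∈ Qset lam, q < i ∨ j ≤ q) → p i < p j

end KeyPoly

namespace KeyPoly
open MvPolynomial

theorem sOp_mul (i : ℕ) (P Q : Poly) : sOp i (P * Q) = sOp i P * sOp i Q := by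
  simp [sOp]
theorem sOp_add (i : ℕ) (P Q : Poly) : sOp i (P + Q) = sOp i P + sOp i Q := by
  simp [sOp]
theorem sOp_sub (i : ℕ) (P Q : Poly) : sOp i (P - Q) = sOp i P - sOp i Q := by
  simp [sOp]
theorem sOp_X (i k : ℕ) : sOp i (X k) = X (Equiv.swap i (i+1) k) := by
  simp [sOp]
theorem sOp_sOp (i : ℕ) (P : Poly) : sOp i (sOp i P) = P := by
  simp [sOp, rename_rename]
  have : (⇑(Equiv.swap i (i+1)) ∘ ⇑(Equiv.swap i (i+1))) = id := by
    ext k; simp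
  rw [this]; simp
theorem sOp_left (i : ℕ) : sOp i (X i) = X (i+1) := by simp [sOp_X]
theorem sOp_right (i : ℕ) : sOp i (X (i+1)) = X i := by simp [sOp_X]
theorem sOp_other (i k : ℕ) (h : k ≠ i) (h' : k ≠ i + 1) : sOp i (X k) = X k := by
  rw [sOp_X, Equiv.swap_apply_of_ne_of_ne h h']

theorem X_sub_ne (i j : ℕ) (h : i ≠ j) : (X i - X j : Poly) ≠ 0 := by
  intro e
  exact h (X_injective (sub_eq_zero.1 e))

theorem sOp_dvd (i : ℕ) (P : Poly) : (X i - X (i+1) : Poly) ∣ P - sOp i P := by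
  induction P using MvPolynomial.induction_on with
  | C a => simp [sOp]
  | add p q hp hq =>
    rw [sOp_add]
    have := dvd_add hp hq
    convert this using 1; ring
  | mul_X p k hp =>
    rw [sOp_mul]
    have hk : (X i - X (i+1) : Poly) ∣ X k - sOp i (X k) := by
      by_cases h1 : k = i
      · subst h1; rw [sOp_left]
      by_cases h2 : k = i + 1
      · subst h2; rw [sOp_right]; exact ⟨-1, by ring⟩
      · rw [sOp_other i k h1 h2]; simp
    have := dvd_add (Dvd.dvd.mul_right hp (X k)) (Dvd.dvd.mul_left hk (sOp i p))
    convert this using 1; ring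

theorem rho_spec' (i : ℕ) (P : Poly) :
    (X i - X (i + 1)) * rhoOp i P = X i * P - sOp i (X i * P) := by
  have h : ∃ Q : Poly, (X i - X (i + 1)) * Q = X i * P - sOp i (X i * P) := by
    obtain ⟨Q, hQ⟩ := sOp_dvd i (X i * P)
    exact ⟨Q, hQ.symm⟩
  rw [rhoOp, dif_pos h]
  exact h.choose_spec

theorem rho_spec (i : ℕ) (P : Poly) :
    (X i - X (i + 1)) * rhoOp i P = X i * P - X (i+1) * sOp i P := by
  rw [rho_spec', sOp_mul, sOp_left]

theorem rho_eq (i : ℕ) (P Q : Poly) (h : (X i - X (i + 1)) * Q = X i * P - X (i+1) * sOp i P) :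
    rhoOp i P = Q :=
  mul_left_cancel₀ (X_sub_ne i (i+1) (by omega)) ((rho_spec i P).trans h.symm)

theorem rho_add (i : ℕ) (P Q : Poly) : rhoOp i (P + Q) = rhoOp i P + rhoOp i Q := by
  apply rho_eq
  rw [mul_add, rho_spec, rho_spec, sOp_add]; ring
theorem rho_sub (i : ℕ) (P Q : Poly) : rhoOp i (P - Q) = rhoOp i P - rhoOp i Q := by
  apply rho_eq
  rw [mul_sub, rho_spec, rho_spec, sOp_sub]; ring
theorem rho_zero (i : ℕ) : rhoOp i 0 = 0 := by
  apply rho_eq; simp [sOp]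
theorem rho_sum {ι : Type*} (i : ℕ) (s : Finset ι) (f : ι → Poly) :
    rhoOp i (∑ a ∈ s, f a) = ∑ a ∈ s, rhoOp i (f a) := by
  induction s using Finset.induction_on with
  | empty => simp [rho_zero]
  | insert a s ha ih => rw [Finset.sum_insert ha, Finset.sum_insert ha, rho_add, ih]

theorem sOp_rho (i : ℕ) (P : Poly) : sOp i (rhoOp i P) = rhoOp i P := by
  have h := rho_spec i P
  have h2 := congrArg (sOp i) h
  rw [sOp_mul, sOp_sub, sOp_sub, sOp_mul, sOp_mul, sOp_left, sOp_right, sOp_sOp] at h2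
  apply mul_left_cancel₀ (X_sub_ne i (i+1) (by omega))
  linear_combination - h - h2

theorem rho_fix (i : ℕ) (P : Poly) (h : sOp i P = P) : rhoOp i P = P := by
  apply rho_eq; rw [h]; ring

theorem rho_rho (i : ℕ) (P : Poly) : rhoOp i (rhoOp i P) = rhoOp i P :=
  rho_fix i _ (sOp_rho i P)

theorem rho_rhoBar (i : ℕ) (P : Poly) : rhoOp i (rhoBarOp i P) = 0 := by
  rw [rhoBarOp, rho_sub, rho_rho, sub_self]

theorem rhoBar_fix (i : ℕ) (P : Poly) (h : sOp i P = P) : rhoBarOp i P = 0 := by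
  rw [rhoBarOp, rho_fix i P h, sub_self]

theorem rhoBar_zero (i : ℕ) : rhoBarOp i 0 = 0 := by
  rw [rhoBarOp, rho_zero, sub_self]

theorem sOp_comm (i j : ℕ) (h : i + 1 < j) (P : Poly) :
    sOp i (sOp j P) = sOp j (sOp i P) := by
  simp only [sOp, rename_rename]
  congr 2
  ext k
  simp only [Function.comp, Equiv.swap_apply_def]
  grind

theorem sOp_braid (i : ℕ) (P : Poly) :
    sOp i (sOp (i+1) (sOp i P)) = sOp (i+1) (sOp i (sOp (i+1) P)) := by
  simp only [sOp, rename_rename]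
  congr 2
  ext k
  simp only [Function.comp, Equiv.swap_apply_def]
  grind

theorem rho_comm (i j : ℕ) (h : i + 1 < j) (P : Poly) :
    rhoOp i (rhoOp j P) = rhoOp j (rhoOp i P) := by
  have e1 := rho_spec i P
  have e2 := rho_spec j P
  have e3 := rho_spec i (rhoOp j P)
  have e4 := rho_spec j (rhoOp i P)
  have e5 := congrArg (sOp j) e1
  have e6 := congrArg (sOp i) e2
  simp only [sOp_mul, sOp_sub, sOp_other j i (by omega) (by omega),
    sOp_other j (i+1) (by omega) (by omega)] at e5
  simp only [sOp_mul, sOp_sub, sOp_other i j (by omega) (by omega),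
    sOp_other i (j+1) (by omega) (by omega), sOp_comm i j h] at e6
  apply mul_left_cancel₀ (X_sub_ne i (i+1) (by omega))
  apply mul_left_cancel₀ (X_sub_ne j (j+1) (by omega))
  linear_combination (X j - X (j+1)) * e3 - (X i - X (i+1)) * e4 + X i * e2 - X (i+1) * e6
    - X j * e1 + X (j+1) * e5

theorem rho_braid (i : ℕ) (P : Poly) :
    rhoOp i (rhoOp (i+1) (rhoOp i P)) = rhoOp (i+1) (rhoOp i (rhoOp (i+1) P)) := by
  have o1 : sOp i (X (i+1+1)) = X (i+1+1) := sOp_other _ _ (by omega) (by omega)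
  have o2 : sOp (i+1) (X i) = X i := sOp_other _ _ (by omega) (by omega)
  have o3 := sOp_right i
  have o4 := sOp_left i
  have o5 := sOp_right (i+1)
  have o6 := sOp_left (i+1)
  have a1 := rho_spec i P
  have a2 := rho_spec (i+1) (rhoOp i P)
  have a3 := rho_spec i (rhoOp (i+1) (rhoOp i P))
  have a4 := congrArg (sOp (i+1)) a1
  have a5 := congrArg (sOp i) a2
  have a6 := congrArg (sOp i) a4
  have b1 := rho_spec (i+1) P
  have b2 := rho_spec i (rhoOp (i+1) P)
  have b3 := rho_spec (i+1) (rhoOp i (rhoOp (i+1) P))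
  have b4 := congrArg (sOp i) b1
  have b5 := congrArg (sOp (i+1)) b2
  have b6 := congrArg (sOp (i+1)) b4
  simp only [sOp_mul, sOp_sub, o1, o2, o3, o4, o5, o6, sOp_rho, sOp_braid] at a4 a5 a6 b4 b5 b6
  have n1 := X_sub_ne i (i+1) (by omega)
  have n2 := X_sub_ne (i+1) (i+1+1) (by omega)
  have n3 := X_sub_ne i (i+1+1) (by omega)
  apply mul_left_cancel₀ n1
  apply mul_left_cancel₀ n2
  apply mul_left_cancel₀ n3
  generalize (X i : Poly) = a at *
  generalize (X (i+1) : Poly) = b at *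
  generalize (X (i+1+1) : Poly) = c at *
  have A : (a - c) * ((b - c) * ((a - b) * rhoOp i (rhoOp (i+1) (rhoOp i P)))) =
     (a*a*b) * P - a*b*b*sOp i P - a*a*c*sOp (i+1) P + a*c*c*sOp (i+1) (sOp i P)
      + b*b*c* sOp i (sOp (i+1) P) - b*c*c*sOp (i+1) (sOp i (sOp (i+1) P)) := by
    linear_combination (a-c)*(b-c)*a3 + a*(a-c)*a2 - b*(b-c)*a5 + a*b*a1 - a*c*a4 + b*c*a6
  have B : (a - c) * ((b - c) * ((a - b) * rhoOp (i+1) (rhoOp i (rhoOp (i+1) P)))) =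
     (a*a*b) * P - a*b*b*sOp i P - a*a*c*sOp (i+1) P + a*c*c*sOp (i+1) (sOp i P)
      + b*b*c* sOp i (sOp (i+1) P) - b*c*c*sOp (i+1) (sOp i (sOp (i+1) P)) := by
    linear_combination (a-c)*(a-b)*b3 + b*(a-c)*b2 - c*(a-b)*b5 + a*a*b1 - b*b*b4 + c*c*b6
  rw [A, B]

theorem rhoBar_comm (i j : ℕ) (h : i + 1 < j) (P : Poly) :
    rhoBarOp i (rhoBarOp j P) = rhoBarOp j (rhoBarOp i P) := by
  simp only [rhoBarOp, rho_sub, rho_comm i j h]; ring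

theorem rhoBar_braid (i : ℕ) (P : Poly) :
    rhoBarOp i (rhoBarOp (i+1) (rhoBarOp i P)) = rhoBarOp (i+1) (rhoBarOp i (rhoBarOp (i+1) P)) := by
  simp only [rhoBarOp, rho_sub, rho_braid i, rho_rho]; ring


def sw (i : ℕ) : Equiv.Perm ℕ := Equiv.swap i (i+1)

theorem sw_apply (i k : ℕ) : sw i k = if k = i then i + 1 else if k = i + 1 then i else k := by
  simp [sw, Equiv.swap_apply_def]

theorem sw_mul_apply (i k : ℕ) (u : Equiv.Perm ℕ) :
    (sw i * u) k = if u k = i then i + 1 else if u k = i + 1 then i else u k := by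
  simp [sw_apply]

theorem sw_symm_apply (i k : ℕ) (u : Equiv.Perm ℕ) :
    (sw i * u).symm k = u.symm (sw i k) := by
  rw [Equiv.symm_apply_eq]
  simp [sw]

theorem sw_sw (i : ℕ) (u : Equiv.Perm ℕ) : sw i * (sw i * u) = u := by
  ext k; simp [sw]

def GP (n : ℕ) (u : Equiv.Perm ℕ) : Prop := ∀ t, t = 0 ∨ n < t → u t = t

theorem GP_symm {n : ℕ} {u : Equiv.Perm ℕ} (h : GP n u) (t : ℕ) (ht : t = 0 ∨ n < t) :
    u.symm t = t := by
  rw [Equiv.symm_apply_eq, h t ht]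

theorem GP_one (n : ℕ) : GP n 1 := fun _ _ => rfl

theorem GP_sw {n : ℕ} {u : Equiv.Perm ℕ} (h : GP n u) {i : ℕ} (h1 : 1 ≤ i) (h2 : i + 1 ≤ n) :
    GP n (sw i * u) := by
  intro t ht
  rw [sw_mul_apply, h t ht]
  grind

theorem GP_range {n : ℕ} {u : Equiv.Perm ℕ} (h : GP n u) {t : ℕ} (h1 : 1 ≤ t) (h2 : t ≤ n) :
    1 ≤ u t ∧ u t ≤ n := by
  by_contra hc
  have h3 : u t = 0 ∨ n < u t := by omega
  have h4 := h _ h3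
  have := u.injective h4
  omega

theorem GP_symm_range {n : ℕ} {u : Equiv.Perm ℕ} (h : GP n u) {t : ℕ} (h1 : 1 ≤ t) (h2 : t ≤ n) :
    1 ≤ u.symm t ∧ u.symm t ≤ n :=
  GP_range (u := u.symm) (fun t ht => GP_symm h t ht) h1 h2

def Asc (u : Equiv.Perm ℕ) (i : ℕ) : Prop := u.symm i < u.symm (i+1)

theorem not_asc {u : Equiv.Perm ℕ} {i : ℕ} (h : ¬ Asc u i) : u.symm (i+1) < u.symm i := by
  have : u.symm (i+1) ≠ u.symm i := fun e => by
    have := u.symm.injective e; omega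
  unfold Asc at h; omega

theorem asc_sw (u : Equiv.Perm ℕ) (i : ℕ) : Asc (sw i * u) i ↔ ¬ Asc u i := by
  constructor
  · intro h h2
    unfold Asc at h h2
    rw [sw_symm_apply, sw_symm_apply, sw_apply, sw_apply] at h
    simp at h; omega
  · intro h
    have h2 := not_asc h
    unfold Asc
    rw [sw_symm_apply, sw_symm_apply, sw_apply, sw_apply]
    simpa using h2

def inv (n : ℕ) (u : Equiv.Perm ℕ) : ℕ :=
  ((Finset.Icc 1 n ×ˢ Finset.Icc 1 n).filter fun x => x.1 < x.2 ∧ u x.2 < u x.1).card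

theorem inv_asc {n : ℕ} {u : Equiv.Perm ℕ} (h : GP n u) {i : ℕ} (h1 : 1 ≤ i) (h2 : i + 1 ≤ n)
    (ha : Asc u i) : inv n (sw i * u) = inv n u + 1 := by
  unfold inv
  rw [← Finset.card_insert_of_notMem (a := (u.symm i, u.symm (i+1)))]
  · congr 1
    ext ⟨x, y⟩
    have hx := GP_symm_range h h1 (by omega)
    have hy := GP_symm_range h (t := i+1) (by omega) h2
    simp only [Finset.mem_filter, Finset.mem_insert, Finset.mem_product, Finset.mem_Icc,
      Prod.mk.injEq, sw_mul_apply]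
    have e1 : x = u.symm i ↔ u x = i := by rw [Equiv.eq_symm_apply]
    have e2 : y = u.symm (i+1) ↔ u y = i+1 := by rw [Equiv.eq_symm_apply]
    have e3 : x = u.symm (i+1) ↔ u x = i+1 := by rw [Equiv.eq_symm_apply]
    have e4 : y = u.symm i ↔ u y = i := by rw [Equiv.eq_symm_apply]
    have e5 : x = y ↔ u x = u y := by simp
    unfold Asc at ha
    generalize u.symm i = a at *
    generalize u.symm (i+1) = b at *
    generalize u x = ux at *
    generalize u y = uy at *
    grind
  · simp

theorem inv_desc {n : ℕ} {u : Equiv.Perm ℕ} (h : GP n u) {i : ℕ} (h1 : 1 ≤ i) (h2 : i + 1 ≤ n)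
    (ha : ¬ Asc u i) : inv n (sw i * u) + 1 = inv n u := by
  have := inv_asc (GP_sw h h1 h2) h1 h2 ((asc_sw u i).2 ha)
  rw [sw_sw] at this
  exact this.symm

theorem eq_one_of_asc {n : ℕ} {u : Equiv.Perm ℕ} (h : GP n u)
    (ha : ∀ i, 1 ≤ i → i + 1 ≤ n → Asc u i) : u = 1 := by
  have hm : StrictMono u.symm := by
    apply strictMono_nat_of_lt_succ
    intro i
    by_cases h0 : i = 0
    · subst h0
      rw [GP_symm h 0 (Or.inl rfl)]
      have : u.symm 1 ≠ u.symm 0 := fun e => by have := u.symm.injective e; omega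
      rw [GP_symm h 0 (Or.inl rfl)] at this
      simp; omega
    by_cases hn : i + 1 ≤ n
    · exact ha i (by omega) hn
    · rw [GP_symm h (i+1) (by omega)]
      by_cases hin : n < i
      · rw [GP_symm h i (by omega)]; omega
      · have := (GP_symm_range h (t := i) (by omega) (by omega)).2
        omega
  have hm2 : StrictMono u := by
    intro a b hab
    rw [← hm.lt_iff_lt]; simpa using hab
  ext k
  have a1 := hm.le_apply (x := u k)
  have a2 := hm2.le_apply (x := k)
  simp at a1
  simp; omega

theorem exists_desc {n : ℕ} {u : Equiv.Perm ℕ} (h : GP n u) (hu : u ≠ 1) :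
    ∃ i, 1 ≤ i ∧ i + 1 ≤ n ∧ ¬ Asc u i := by
  by_contra hc
  push Not at hc
  exact hu (eq_one_of_asc h hc)

def wp : List ℕ → Equiv.Perm ℕ
  | [] => 1
  | i :: w => sw i * wp w

theorem permOfWord_eq (w : List ℕ) : permOfWord w = ⇑(wp w) := by
  induction w with
  | nil => rfl
  | cons i w ih =>
    have : permOfWord (i :: w) = swapVal i ∘ permOfWord w := rfl
    rw [this, ih]
    ext k
    simp [wp, swapVal, sw_apply]

def Lett (n : ℕ) (w : List ℕ) : Prop := ∀ i ∈ w, 1 ≤ i ∧ i + 1 ≤ n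

theorem GP_wp {n : ℕ} {w : List ℕ} (h : Lett n w) : GP n (wp w) := by
  induction w with
  | nil => exact GP_one n
  | cons i w ih =>
    have := h i (by simp)
    exact GP_sw (ih fun j hj => h j (by simp [hj])) this.1 this.2

theorem inv_wp_le {n : ℕ} {w : List ℕ} (h : Lett n w) : inv n (wp w) ≤ w.length := by
  induction w with
  | nil =>
    refine le_of_eq (Finset.card_eq_zero.2 (Finset.filter_eq_empty_iff.2 ?_))
    rintro ⟨x, y⟩ _ ⟨h1, h2⟩
    simp only [wp, Equiv.Perm.coe_one, id_eq] at h1 h2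
    omega
  | cons i w ih =>
    have h1 := h i (by simp)
    have hl : Lett n w := fun j hj => h j (by simp [hj])
    have := ih hl
    have hg := GP_wp hl
    simp only [wp, List.length_cons]
    by_cases ha : Asc (wp w) i
    · rw [inv_asc hg h1.1 h1.2 ha]; omega
    · have := inv_desc hg h1.1 h1.2 ha; omega

def RW (n : ℕ) (w : List ℕ) (u : Equiv.Perm ℕ) : Prop :=
  Lett n w ∧ wp w = u ∧ w.length = inv n u

theorem RW_GP {n : ℕ} {w : List ℕ} {u : Equiv.Perm ℕ} (h : RW n w u) : GP n u := by
  rw [← h.2.1]; exact GP_wp h.1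

theorem RW_cons {n i : ℕ} {w : List ℕ} {u : Equiv.Perm ℕ} (h1 : 1 ≤ i) (h2 : i + 1 ≤ n)
    (h : RW n w u) (ha : Asc u i) : RW n (i :: w) (sw i * u) := by
  refine ⟨?_, ?_, ?_⟩
  · intro j hj
    rcases List.mem_cons.1 hj with rfl | hj
    · exact ⟨h1, h2⟩
    · exact h.1 j hj
  · simp [wp, h.2.1]
  · rw [inv_asc (RW_GP h) h1 h2 ha, List.length_cons, h.2.2]

theorem RW_cons' {n i : ℕ} {w : List ℕ} {u : Equiv.Perm ℕ} (h1 : 1 ≤ i) (h2 : i + 1 ≤ n)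
    (h : RW n w (sw i * u)) (ha : ¬ Asc u i) : RW n (i :: w) u := by
  have := RW_cons h1 h2 h ((asc_sw u i).2 ha)
  rwa [sw_sw] at this

theorem RW_uncons {n i : ℕ} {w : List ℕ} {u : Equiv.Perm ℕ} (h : RW n (i :: w) u) :
    1 ≤ i ∧ i + 1 ≤ n ∧ RW n w (sw i * u) ∧ ¬ Asc u i := by
  have h1 := h.1 i (by simp)
  have hl : Lett n w := fun j hj => h.1 j (by simp [hj])
  have hu : u = sw i * wp w := h.2.1.symm
  have hw : wp w = sw i * u := by rw [hu, sw_sw]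
  have hle := inv_wp_le hl
  have hlen := h.2.2
  simp only [List.length_cons] at hlen
  have ha : ¬ Asc u i := by
    intro ha
    have := inv_asc (RW_GP h) h1.1 h1.2 ha
    rw [← hw] at this; omega
  have := inv_desc (RW_GP h) h1.1 h1.2 ha
  exact ⟨h1.1, h1.2, ⟨hl, hw, by omega⟩, ha⟩

theorem inv_one (n : ℕ) : inv n 1 = 0 := by
  have := inv_wp_le (n := n) (w := []) (by intro i hi; simp at hi)
  simpa [wp] using this

theorem exists_RW {n : ℕ} {u : Equiv.Perm ℕ} (h : GP n u) : ∃ w, RW n w u := by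
  induction hk : inv n u using Nat.strong_induction_on generalizing u with
  | _ k ih =>
    by_cases hu : u = 1
    · subst hu
      exact ⟨[], by intro i hi; simp at hi, rfl, by simp [inv_one]⟩
    · obtain ⟨i, h1, h2, ha⟩ := exists_desc h hu
      have := inv_desc h h1 h2 ha
      obtain ⟨w, hw⟩ := ih (inv n (sw i * u)) (by omega) (GP_sw h h1 h2) rfl
      exact ⟨i :: w, RW_cons' h1 h2 hw ha⟩

theorem isReduced_iff {n : ℕ} {u : Equiv.Perm ℕ} (h : GP n u) (w : List ℕ) :
    IsReducedWord n w u ↔ RW n w u := by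
  have key : ∀ w, WordFor n w u ↔ Lett n w ∧ wp w = u := by
    intro w
    unfold WordFor
    rw [permOfWord_eq]
    constructor
    · rintro ⟨hl, he⟩
      refine ⟨hl, ?_⟩
      ext t
      by_cases ht : 1 ≤ t ∧ t ≤ n
      · exact he t ht.1 ht.2
      · rw [GP_wp hl t (by omega), h t (by omega)]
    · rintro ⟨hl, he⟩
      exact ⟨hl, fun t _ _ => by rw [he]⟩
  unfold IsReducedWord
  constructor
  · rintro ⟨hw, hm⟩
    obtain ⟨hl, he⟩ := (key w).1 hw
    obtain ⟨v, hv⟩ := exists_RW h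
    have h1 := hm v ((key v).2 ⟨hv.1, hv.2.1⟩)
    have h2 := inv_wp_le hl
    rw [he] at h2
    exact ⟨hl, he, by have := hv.2.2; omega⟩
  · intro hw
    refine ⟨(key w).2 ⟨hw.1, hw.2.1⟩, fun w' hw' => ?_⟩
    obtain ⟨hl, he⟩ := (key w').1 hw'
    have h2 := inv_wp_le hl
    rw [he] at h2
    rw [hw.2.2]; exact h2

theorem matsu_aux {n : ℕ} {u : Equiv.Perm ℕ} (P : Poly) (k : ℕ)
    (IH : ∀ (v : Equiv.Perm ℕ) (w w' : List ℕ), w.length < k → RW n w v → RW n w' v →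
      applyOps rhoBarOp w P = applyOps rhoBarOp w' P)
    (i j : ℕ) (hij : i < j) (w w' : List ℕ) (hk : w.length + 1 = k) (hw : RW n (i :: w) u)
    (hw' : RW n (j :: w') u) :
    applyOps rhoBarOp (i :: w) P = applyOps rhoBarOp (j :: w') P := by
  obtain ⟨i1, i2, hw1, ha1⟩ := RW_uncons hw
  obtain ⟨j1, j2, hw2, ha2⟩ := RW_uncons hw'
  have hd1 := not_asc ha1
  have hd2 := not_asc ha2
  have hlen : w'.length + 1 = k := by
    have h1 := hw.2.2; have h2 := hw'.2.2; simp at h1 h2; omega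
  have hg := RW_GP hw
  by_cases hc : i + 1 < j
  · have hcomm : sw j * (sw i * u) = sw i * (sw j * u) := by
      ext t; simp only [sw_mul_apply]; grind
    obtain ⟨x, hx⟩ := exists_RW (GP_sw (GP_sw hg i1 i2) j1 j2)
    have r1 : RW n (j :: x) (sw i * u) := by
      apply RW_cons' j1 j2 hx
      unfold Asc
      simp only [sw_symm_apply, sw_apply]
      rw [if_neg (by omega), if_neg (by omega), if_neg (by omega), if_neg (by omega)]
      omega
    have r2 : RW n (i :: x) (sw j * u) := by
      rw [hcomm] at hx
      apply RW_cons' i1 i2 hx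
      unfold Asc
      simp only [sw_symm_apply, sw_apply]
      rw [if_neg (by omega), if_neg (by omega), if_neg (by omega), if_neg (by omega)]
      omega
    have e1 := IH _ _ _ (by omega) hw1 r1
    have e2 := IH _ _ _ (by omega) hw2 r2
    simp only [applyOps] at e1 e2 ⊢
    rw [e1, e2, rhoBar_comm i j hc]
  · have hj : j = i + 1 := by omega
    subst hj
    have q1 : ¬ (i + 1 + 1 = i) := by omega
    have q2 : ¬ (i = i + 1 + 1) := by omega
    have hbr : sw i * (sw (i+1) * (sw i * u)) = sw (i+1) * (sw i * (sw (i+1) * u)) := by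
      ext t; simp only [sw_mul_apply]; grind
    obtain ⟨x, hx⟩ := exists_RW (GP_sw (GP_sw (GP_sw hg i1 i2) j1 j2) i1 i2)
    have r1 : RW n ((i+1) :: i :: x) (sw i * u) := by
      apply RW_cons' j1 j2
      · apply RW_cons' i1 i2 hx
        unfold Asc
        simp [sw_symm_apply, sw_apply, q1, q2]
        omega
      · unfold Asc
        simp [sw_symm_apply, sw_apply, q1, q2]
        omega
    have r2 : RW n (i :: (i+1) :: x) (sw (i+1) * u) := by
      rw [hbr] at hx
      apply RW_cons' i1 i2
      · apply RW_cons' j1 j2 hx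
        unfold Asc
        simp [sw_symm_apply, sw_apply, q1, q2]
        omega
      · unfold Asc
        simp [sw_symm_apply, sw_apply, q1, q2]
        omega
    have e1 := IH _ _ _ (by omega) hw1 r1
    have e2 := IH _ _ _ (by omega) hw2 r2
    simp only [applyOps] at e1 e2 ⊢
    rw [e1, e2, rhoBar_braid i]

theorem matsu {n : ℕ} (P : Poly) (k : ℕ) : ∀ (u : Equiv.Perm ℕ) (w w' : List ℕ), w.length < k →
    RW n w u → RW n w' u → applyOps rhoBarOp w P = applyOps rhoBarOp w' P := by
  induction k with
  | zero => intro u w w' h; omega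
  | succ k IH =>
    intro u w w' hk hw hw'
    have hlen : w.length = w'.length := by rw [hw.2.2, hw'.2.2]
    match w, w' with
    | [], [] => rfl
    | [], _ :: _ => simp at hlen
    | _ :: _, [] => simp at hlen
    | i :: w, j :: w' =>
      simp only [List.length_cons] at hk hlen
      rcases lt_trichotomy i j with h | h | h
      · exact matsu_aux P (w.length + 1) (fun v a b hl => IH v a b (by omega)) i j h w w' rfl hw hw'
      · subst h
        simp only [applyOps]
        rw [IH _ w w' (by omega) (RW_uncons hw).2.2.1 (RW_uncons hw').2.2.1]
      · exact (matsu_aux P (w'.length + 1) (fun v a b hl => IH v a b (by omega))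
          j i h w' w rfl hw' hw).symm


theorem sort_le_iff (A : Finset ℕ) (i m : ℕ) (hi : i < A.card) :
    (A.sort (· ≤ ·)).getD i 0 ≤ m ↔ i < (A.filter (· ≤ m)).card := by
  set f := A.orderEmbOfFin rfl with hf
  have hlen : i < (A.sort (· ≤ ·)).length := by simpa using hi
  have e : (A.sort (· ≤ ·)).getD i 0 = f ⟨i, hi⟩ := by
    rw [List.getD_eq_getElem _ _ hlen, hf, Finset.orderEmbOfFin_apply]
    rfl
  rw [e]
  have hmem : ∀ k, f k ∈ A := fun k => Finset.orderEmbOfFin_mem A rfl k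
  have hsurj : ∀ a ∈ A, ∃ k, f k = a := by
    intro a ha
    have := Finset.range_orderEmbOfFin A rfl
    have h2 : a ∈ Set.range (A.orderEmbOfFin rfl) := by rw [this]; exact ha
    exact h2
  constructor
  · intro h
    have hsub : (Finset.Iic (⟨i, hi⟩ : Fin A.card)).image f ⊆ A.filter (· ≤ m) := by
      intro a ha
      obtain ⟨k, hk, rfl⟩ := Finset.mem_image.1 ha
      rw [Finset.mem_filter]
      exact ⟨hmem k, (f.monotone (Finset.mem_Iic.1 hk)).trans h⟩
    have := Finset.card_le_card hsub
    rw [Finset.card_image_of_injective _ f.injective, Fin.card_Iic] at this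
    simpa using this
  · intro h
    by_contra hc
    push Not at hc
    have hsub : A.filter (· ≤ m) ⊆ (Finset.Iio (⟨i, hi⟩ : Fin A.card)).image f := by
      intro a ha
      rw [Finset.mem_filter] at ha
      obtain ⟨k, rfl⟩ := hsurj a ha.1
      refine Finset.mem_image_of_mem _ (Finset.mem_Iio.2 ?_)
      exact f.lt_iff_lt.1 (lt_of_le_of_lt ha.2 hc)
    have := Finset.card_le_card hsub
    rw [Finset.card_image_of_injective _ f.injective, Fin.card_Iio] at this
    simp at this; omega

theorem inShape_iff {n : ℕ} (lam : NPartition n) (j i : ℕ) :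
    InShape lam j i ↔ 1 ≤ j ∧ 1 ≤ i ∧ i ≤ zeta lam j := by
  unfold InShape zeta
  constructor
  · rintro ⟨h1, h2, h3, h4⟩
    refine ⟨h1, h2, ?_⟩
    have hsub : Finset.Icc 1 i ⊆ (Finset.Icc 1 n).filter fun i => j ≤ lam.part i := by
      intro k hk
      rw [Finset.mem_Icc] at hk
      rw [Finset.mem_filter, Finset.mem_Icc]
      exact ⟨⟨hk.1, by omega⟩, h4.trans (lam.antitone hk.1 hk.2)⟩
    have := Finset.card_le_card hsub
    simpa using this
  · rintro ⟨h1, h2, h3⟩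
    have hin : i ≤ n := by
      refine h3.trans ((Finset.card_filter_le _ _).trans ?_)
      simp
    refine ⟨h1, h2, hin, ?_⟩
    by_contra hc
    have hsub : ((Finset.Icc 1 n).filter fun i => j ≤ lam.part i) ⊆ Finset.Icc 1 (i-1) := by
      intro k hk
      rw [Finset.mem_filter, Finset.mem_Icc] at hk
      rw [Finset.mem_Icc]
      refine ⟨hk.1.1, ?_⟩
      by_contra hk2
      exact hc (hk.2.trans (lam.antitone h2 (by omega)))
    have := Finset.card_le_card hsub
    simp at this; omega

theorem zeta_le {n : ℕ} (lam : NPartition n) (j : ℕ) : zeta lam j ≤ n := by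
  refine (Finset.card_filter_le _ _).trans ?_
  simp

theorem mem_Qset_of_lt {n : ℕ} (lam : NPartition n) (a : ℕ) (h1 : 1 ≤ a)
    (h2 : lam.part (a+1) < lam.part a) : a ∈ Qset lam := by
  have han : a ≤ n := by
    by_contra hc
    have := lam.outside a (by omega); omega
  have e1 : InShape lam (lam.part a) a := ⟨by omega, h1, han, le_rfl⟩
  have e2 : ¬ InShape lam (lam.part a) (a+1) := fun h => by have := h.2.2.2; omega
  rw [inShape_iff] at e1 e2
  refine Finset.mem_image.2 ⟨lam.part a, ?_, ?_⟩
  · rw [Finset.mem_Icc]; exact ⟨e1.1, lam.antitone le_rfl h1⟩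
  · by_contra hc
    apply e2
    refine ⟨e1.1, by omega, by omega⟩

def cnt (u : Equiv.Perm ℕ) (q m : ℕ) : ℕ := ((Finset.Icc 1 q).filter fun t => u t ≤ m).card

def Bru {n : ℕ} (lam : NPartition n) (u v : Equiv.Perm ℕ) : Prop :=
  ∀ q ∈ Qset lam, ∀ m, cnt v q m ≤ cnt u q m

theorem key_le_iff {n : ℕ} (lam : NPartition n) (u v : Equiv.Perm ℕ) :
    (∀ j i, InShape lam j i → keyTab lam u j i ≤ keyTab lam v j i) ↔ Bru lam u v := by
  have hc : ∀ (u : Equiv.Perm ℕ) q, ((Finset.Icc 1 q).image u).card = q := by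
    intro u q
    rw [Finset.card_image_of_injective _ u.injective]; simp
  have hf : ∀ (u : Equiv.Perm ℕ) q m, (((Finset.Icc 1 q).image u).filter (· ≤ m)).card = cnt u q m := by
    intro u q m
    rw [Finset.filter_image, Finset.card_image_of_injective _ u.injective]; rfl
  have key : ∀ (u : Equiv.Perm ℕ) j i m, InShape lam j i →
      (keyTab lam u j i ≤ m ↔ i - 1 < cnt u (zeta lam j) m) := by
    intro u j i m h
    rw [keyTab, if_pos h]
    rw [inShape_iff] at h
    rw [sort_le_iff _ _ _ (by rw [hc]; omega), hf]
  have hb : ∀ (u : Equiv.Perm ℕ) q m, cnt u q m ≤ q := by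
    intro u q m
    refine (Finset.card_filter_le _ _).trans ?_
    simp
  constructor
  · intro h q hq m
    obtain ⟨j, hj, rfl⟩ := Finset.mem_image.1 hq
    rw [Finset.mem_Icc] at hj
    by_contra hlt
    push Not at hlt
    set i := cnt u (zeta lam j) m + 1 with hi
    have hs : InShape lam j i := by
      rw [inShape_iff]
      have := hb v (zeta lam j) m
      exact ⟨hj.1, by omega, by omega⟩
    have h1 := (key v j i m hs).2 (by omega)
    have h2 := (key u j i m hs).1 ((h j i hs).trans h1)
    omega
  · intro h j i hs
    have hq : zeta lam j ∈ Qset lam := by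
      refine Finset.mem_image_of_mem _ (Finset.mem_Icc.2 ⟨hs.1, ?_⟩)
      exact hs.2.2.2.trans (lam.antitone le_rfl hs.2.1)
    rw [key u j i _ hs]
    exact lt_of_lt_of_le ((key v j i _ hs).1 le_rfl) (h _ hq _)

theorem cnt_succ (u : Equiv.Perm ℕ) (q m : ℕ) :
    cnt u q (m+1) = cnt u q m + if u.symm (m+1) ∈ Finset.Icc 1 q then 1 else 0 := by
  unfold cnt
  split_ifs with h
  · rw [← Finset.card_insert_of_notMem (a := u.symm (m+1))]
    · congr 1
      ext t
      rw [Finset.mem_filter, Finset.mem_insert, Finset.mem_filter]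
      constructor
      · rintro ⟨h1, h2⟩
        by_cases h3 : u t = m + 1
        · left; rw [← h3]; simp
        · right; exact ⟨h1, by omega⟩
      · rintro (rfl | ⟨h1, h2⟩)
        · exact ⟨h, by simp⟩
        · exact ⟨h1, by omega⟩
    · simp
  · rw [add_zero]
    congr 1
    ext t
    rw [Finset.mem_filter, Finset.mem_filter]
    constructor
    · rintro ⟨h1, h2⟩
      refine ⟨h1, ?_⟩
      by_contra h3
      apply h
      have : u t = m + 1 := by omega
      rw [← this]; simpa using h1
    · rintro ⟨h1, h2⟩
      exact ⟨h1, by omega⟩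

theorem cnt_sw (u : Equiv.Perm ℕ) (q m i : ℕ) (h : m ≠ i) : cnt (sw i * u) q m = cnt u q m := by
  unfold cnt
  congr 1
  ext t
  rw [Finset.mem_filter, Finset.mem_filter, sw_mul_apply]
  constructor <;> rintro ⟨h1, h2⟩ <;> refine ⟨h1, ?_⟩ <;> grind

theorem cnt_pattern (u : Equiv.Perm ℕ) (q i : ℕ) (h1 : 1 ≤ i) (hu0 : u 0 = 0) :
    ∃ a b : ℕ, a ≤ 1 ∧ b ≤ 1 ∧ (Asc u i → b ≤ a) ∧ (¬ Asc u i → a ≤ b) ∧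
      cnt u q i = cnt u q (i-1) + a ∧ cnt u q (i+1) = cnt u q (i-1) + a + b ∧
      cnt (sw i * u) q (i-1) = cnt u q (i-1) ∧
      cnt (sw i * u) q i = cnt u q (i-1) + b ∧
      cnt (sw i * u) q (i+1) = cnt u q (i-1) + a + b := by
  obtain ⟨k, rfl⟩ : ∃ k, i = k + 1 := ⟨i - 1, by omega⟩
  have hpos : ∀ t, 1 ≤ t → 1 ≤ u.symm t := by
    intro t ht
    by_contra hc
    have : u.symm t = 0 := by omega
    rw [Equiv.symm_apply_eq] at this; omega
  have p1 := hpos (k+1) (by omega)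
  have p2 := hpos (k+1+1) (by omega)
  have e1 := cnt_succ u q k
  have e2 := cnt_succ u q (k+1)
  have e3 := cnt_succ (sw (k+1) * u) q k
  have e4 := cnt_sw u q k (k+1) (by omega)
  have e5 := cnt_sw u q (k+1+1) (k+1) (by omega)
  rw [sw_symm_apply, sw_apply, if_pos rfl] at e3
  simp only [Nat.add_sub_cancel]
  refine ⟨_, _, ?_, ?_, ?_, ?_, e1, by rw [e2, e1], e4, by rw [e3, e4], by rw [e5, e2, e1]⟩
  · split_ifs <;> omega
  · split_ifs <;> omega
  · unfold Asc
    simp only [Finset.mem_Icc]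
    intro h
    split_ifs <;> omega
  · intro h
    have := not_asc h
    simp only [Finset.mem_Icc]
    split_ifs <;> omega

theorem bru_asc {n : ℕ} (lam : NPartition n) (u v : Equiv.Perm ℕ) (hu : u 0 = 0) (hv : v 0 = 0)
    (i : ℕ) (h1 : 1 ≤ i) (hvi : Asc v i) (hui : Asc u i) :
    Bru lam u (sw i * v) ↔ Bru lam u v := by
  unfold Bru
  refine forall_congr' fun q => forall_congr' fun hq => ?_
  obtain ⟨a, b, _, _, h3, _, h5, h6, h7, h8, h9⟩ := cnt_pattern u q i h1 hu
  obtain ⟨c, d, _, _, k3, _, k5, k6, k7, k8, k9⟩ := cnt_pattern v q i h1 hv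
  have h3 := h3 hui
  have k3 := k3 hvi
  constructor
  · intro h m
    by_cases hm : m = i
    · subst hm
      have m1 := h (m-1)
      have m2 := h m
      have m3 := h (m+1)
      omega
    · have := h m; rwa [cnt_sw _ _ _ _ hm] at this
  · intro h m
    by_cases hm : m = i
    · subst hm
      have m2 := h m
      omega
    · have := h m; rwa [cnt_sw _ _ _ _ hm]

theorem bru_desc {n : ℕ} (lam : NPartition n) (u v : Equiv.Perm ℕ) (hu : u 0 = 0) (hv : v 0 = 0)
    (i : ℕ) (h1 : 1 ≤ i) (hvi : Asc v i) (hui : Asc u i) :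
    Bru lam (sw i * u) (sw i * v) ↔ Bru lam u v := by
  unfold Bru
  refine forall_congr' fun q => forall_congr' fun hq => ?_
  obtain ⟨a, b, _, _, h3, _, h5, h6, h7, h8, h9⟩ := cnt_pattern u q i h1 hu
  obtain ⟨c, d, _, _, k3, _, k5, k6, k7, k8, k9⟩ := cnt_pattern v q i h1 hv
  have h3 := h3 hui
  have k3 := k3 hvi
  constructor
  · intro h m
    by_cases hm : m = i
    · subst hm
      have m1 := h (m-1)
      have m2 := h m
      have m3 := h (m+1)
      omega
    · have := h m; rwa [cnt_sw _ _ _ _ hm, cnt_sw _ _ _ _ hm] at this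
  · intro h m
    by_cases hm : m = i
    · subst hm
      have m1 := h (m-1)
      have m2 := h m
      have m3 := h (m+1)
      omega
    · have := h m; rwa [cnt_sw _ _ _ _ hm, cnt_sw _ _ _ _ hm]

def InS {n : ℕ} (lam : NPartition n) (u : Equiv.Perm ℕ) : Prop :=
  ∀ i j, 1 ≤ i → i < j → j ≤ n → (∀ q ∈ Qset lam, q < i ∨ j ≤ q) → u i < u j

theorem isNPerm_of_GP {n : ℕ} {u : Equiv.Perm ℕ} (h : GP n u) : IsNPerm n u := by
  refine ⟨?_, u.injective.injOn, ?_⟩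
  · intro t ht
    exact GP_range h ht.1 ht.2
  · intro t ht
    exact ⟨u.symm t, GP_symm_range h ht.1 ht.2, by simp⟩

theorem inSnLam_iff {n : ℕ} (lam : NPartition n) {u : Equiv.Perm ℕ} (h : GP n u) :
    InSnLam lam u ↔ InS lam u :=
  ⟨fun h => h.2, fun h2 => ⟨isNPerm_of_GP h, h2⟩⟩

theorem inS_sw_of_desc {n : ℕ} (lam : NPartition n) {u : Equiv.Perm ℕ} (hS : InS lam u) (i : ℕ)
    (ha : ¬ Asc u i) : InS lam (sw i * u) := by
  intro x y h1 h2 h3 h4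
  have h5 := hS x y h1 h2 h3 h4
  have hd := not_asc ha
  rw [sw_mul_apply, sw_mul_apply]
  have e1 : u x = i → u.symm i = x := fun e => by rw [← e]; simp
  have e2 : u y = i + 1 → u.symm (i+1) = y := fun e => by rw [← e]; simp
  grind

theorem bru_one {n : ℕ} (lam : NPartition n) {u : Equiv.Perm ℕ} (h : GP n u) (hS : InS lam u)
    (hb : Bru lam u 1) : u = 1 := by
  have hq : ∀ q ∈ Qset lam, ∀ t, 1 ≤ t → t ≤ q → u t ≤ q := by
    intro q hq t h1 h2
    have h3 := hb q hq q
    have h4 : cnt 1 q q = q := by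
      unfold cnt
      rw [Finset.filter_true_of_mem]
      · simp
      · intro t ht; rw [Finset.mem_Icc] at ht; simpa using ht.2
    have h5 : ((Finset.Icc 1 q).filter fun t => u t ≤ q) = Finset.Icc 1 q := by
      apply Finset.eq_of_subset_of_card_le (Finset.filter_subset _ _)
      rw [h4] at h3
      simpa [cnt] using h3
    have h6 : t ∈ Finset.Icc 1 q := Finset.mem_Icc.2 ⟨h1, h2⟩
    rw [← h5, Finset.mem_filter] at h6
    exact h6.2
  have hq2 : ∀ q ∈ Qset lam, ∀ t, 1 ≤ t → t ≤ n → q < t → q < u t := by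
    intro q hqq t h1 h2 h3
    by_contra hc
    push Not at hc
    have hinj : Set.InjOn u (Finset.Icc 1 q : Set ℕ) := u.injective.injOn
    have himg : (Finset.Icc 1 q).image u = Finset.Icc 1 q := by
      apply Finset.eq_of_subset_of_card_le
      · intro x hx
        obtain ⟨s, hs, rfl⟩ := Finset.mem_image.1 hx
        rw [Finset.mem_Icc] at hs ⊢
        exact ⟨(GP_range h hs.1 (by omega)).1, hq q hqq s hs.1 hs.2⟩
      · rw [Finset.card_image_of_injective _ u.injective]
    have : u t ∈ (Finset.Icc 1 q).image u := by
      rw [himg, Finset.mem_Icc]; exact ⟨(GP_range h h1 h2).1, hc⟩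
    obtain ⟨s, hs, he⟩ := Finset.mem_image.1 this
    have := u.injective he
    rw [Finset.mem_Icc] at hs; omega
  apply eq_one_of_asc h
  intro i h1 h2
  by_contra ha
  have hd := not_asc ha
  have r1 := GP_symm_range h h1 (by omega)
  have r2 := GP_symm_range h (t := i+1) (by omega) h2
  by_cases hex : ∃ q ∈ Qset lam, u.symm (i+1) ≤ q ∧ q < u.symm i
  · obtain ⟨q, hqq, h3, h4⟩ := hex
    have e1 := hq q hqq _ r2.1 h3
    have e2 := hq2 q hqq _ r1.1 r1.2 h4
    simp at e1 e2; omega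
  · have := hS _ _ r2.1 hd r1.2 (by
      intro q hqq
      by_contra hc
      exact hex ⟨q, hqq, by omega, by omega⟩)
    simp at this

theorem atom_eq {n : ℕ} (lam : NPartition n) {u : Equiv.Perm ℕ} {w : List ℕ} (hw : RW n w u) :
    atomPoly lam u = applyOps rhoBarOp w (lamMonomial lam) := by
  have hg := RW_GP hw
  have hex : ∃ w : List ℕ, IsReducedWord n w u := ⟨w, (isReduced_iff hg w).2 hw⟩
  rw [atomPoly, dif_pos hex]
  have h2 := (isReduced_iff hg _).1 hex.choose_spec
  exact matsu _ _ u _ _ (Nat.lt_succ_self _) h2 hw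

theorem atom_one {n : ℕ} (lam : NPartition n) : atomPoly lam ⇑(1 : Equiv.Perm ℕ) = lamMonomial lam := by
  have : RW n [] 1 := ⟨by intro i hi; simp at hi, rfl, by simp [inv_one]⟩
  rw [atom_eq lam this]; rfl

theorem atom_asc {n : ℕ} (lam : NPartition n) {u : Equiv.Perm ℕ} (h : GP n u) {i : ℕ} (h1 : 1 ≤ i)
    (h2 : i + 1 ≤ n) (ha : Asc u i) :
    atomPoly lam ⇑(sw i * u) = rhoBarOp i (atomPoly lam u) := by
  obtain ⟨w, hw⟩ := exists_RW h
  rw [atom_eq lam hw, atom_eq lam (RW_cons h1 h2 hw ha)]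
  rfl

theorem wp_append (w : List ℕ) (a : ℕ) : wp (w ++ [a]) = wp w * sw a := by
  induction w with
  | nil => simp [wp]
  | cons i w ih => simp [wp, ih, mul_assoc]

theorem applyOps_append (f : ℕ → Poly → Poly) (w : List ℕ) (a : ℕ) (P : Poly) :
    applyOps f (w ++ [a]) P = applyOps f w (f a P) := by
  induction w with
  | nil => rfl
  | cons i w ih => simp [applyOps, ih]

theorem applyOps_zero (w : List ℕ) : applyOps rhoBarOp w 0 = 0 := by
  induction w with
  | nil => rfl
  | cons i w ih => simp [applyOps, ih, rhoBar_zero]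

theorem sOp_lam {n : ℕ} (lam : NPartition n) (a : ℕ) (h1 : 1 ≤ a) (h2 : a + 1 ≤ n)
    (h : lam.part a = lam.part (a+1)) : sOp a (lamMonomial lam) = lamMonomial lam := by
  unfold lamMonomial sOp
  rw [map_prod]
  simp only [map_pow, rename_X]
  apply Finset.prod_equiv (Equiv.swap a (a+1))
  · intro i
    simp only [Finset.mem_Icc, Equiv.swap_apply_def]
    grind
  · intro i hi
    congr 1
    simp only [Equiv.swap_apply_def]
    grind

theorem atom_zero {n : ℕ} (lam : NPartition n) {u : Equiv.Perm ℕ} (h : GP n u) {i : ℕ} (h1 : 1 ≤ i)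
    (h2 : i + 1 ≤ n) (ha : Asc u i) (hS : InS lam u) (hnS : ¬ InS lam (sw i * u)) :
    atomPoly lam ⇑(sw i * u) = 0 := by
  have hx : ∃ x y, 1 ≤ x ∧ x < y ∧ y ≤ n ∧ (∀ q ∈ Qset lam, q < x ∨ y ≤ q) ∧
      u x = i ∧ u y = i + 1 := by
    unfold InS at hnS
    push Not at hnS
    obtain ⟨x, y, k1, k2, k3, k4, k5⟩ := hnS
    refine ⟨x, y, k1, k2, k3, k4, ?_⟩
    have := hS x y k1 k2 k3 k4
    rw [sw_mul_apply, sw_mul_apply] at k5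
    grind
  obtain ⟨x, y, k1, k2, k3, k4, k5, k6⟩ := hx
  have hy : y = x + 1 := by
    by_contra hc
    have a1 := hS x (x+1) k1 (by omega) (by omega) (fun q hq => by have := k4 q hq; omega)
    have a2 := hS (x+1) y (by omega) (by omega) (by omega) (fun q hq => by have := k4 q hq; omega)
    omega
  subst hy
  have hlam : lam.part x = lam.part (x+1) := by
    have b1 := lam.antitone k1 (Nat.le_succ x)
    by_contra hc
    have := k4 x (mem_Qset_of_lt lam x k1 (by simp at b1; omega))
    omega
  have hcomm : sw i * u = u * sw x := by
    ext t
    rw [sw_mul_apply]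
    simp only [Equiv.Perm.mul_apply, sw_apply]
    have e1 : u t = i ↔ t = x := by rw [← k5]; simp
    have e2 : u t = i + 1 ↔ t = x + 1 := by rw [← k6]; simp
    grind
  obtain ⟨w, hw⟩ := exists_RW h
  have hr : RW n (w ++ [x]) (sw i * u) := by
    refine ⟨?_, ?_, ?_⟩
    · intro j hj
      rcases List.mem_append.1 hj with hj | hj
      · exact hw.1 j hj
      · simp at hj; subst hj; exact ⟨k1, k3⟩
    · rw [wp_append, hw.2.1, hcomm]
    · rw [inv_asc h h1 h2 ha, ← hw.2.2]; simp
  rw [atom_eq lam hr, applyOps_append, rhoBar_fix x _ (sOp_lam lam x k1 k3 hlam), applyOps_zero]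

theorem GP_finite (n : ℕ) : {u : Equiv.Perm ℕ | GP n u}.Finite := by
  apply Set.Finite.of_injOn (f := fun (u : Equiv.Perm ℕ) (k : Fin (n+1)) => Fin.ofNat (n+1) (u k))
    (t := Set.univ) (fun _ _ => Set.mem_univ _) _ Set.finite_univ
  intro u hu v hv huv
  ext t
  by_cases ht : 1 ≤ t ∧ t ≤ n
  · have h1 := congrFun huv ⟨t, by omega⟩
    have h2 := congrArg Fin.val h1
    simp only [Fin.val_ofNat] at h2
    rwa [Nat.mod_eq_of_lt (by have := (GP_range hu ht.1 ht.2).2; omega),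
      Nat.mod_eq_of_lt (by have := (GP_range hv ht.1 ht.2).2; omega)] at h2
  · rw [hu t (by omega), hv t (by omega)]

def GF (n : ℕ) : Finset (Equiv.Perm ℕ) := (GP_finite n).toFinset

theorem mem_GF {n : ℕ} {u : Equiv.Perm ℕ} : u ∈ GF n ↔ GP n u := by simp [GF]

theorem step {n : ℕ} (lam : NPartition n) {v : Equiv.Perm ℕ} (hv : GP n v) {i : ℕ} (h1 : 1 ≤ i)
    (h2 : i + 1 ≤ n) (ha : Asc v i) :
    rhoOp i (∑ u ∈ (GF n).filter (fun u => InS lam u ∧ Bru lam u v), atomPoly lam u) =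
      ∑ u ∈ (GF n).filter (fun u => InS lam u ∧ Bru lam u (sw i * v)), atomPoly lam u := by
  have hv0 : v 0 = 0 := hv 0 (Or.inl rfl)
  rw [rho_sum, ← Finset.sum_filter_add_sum_filter_not _ (fun u => Asc u i),
    ← Finset.sum_filter_add_sum_filter_not ((GF n).filter _) (fun u => Asc u i) (fun u => atomPoly lam u)]
  have hz : ∑ u ∈ ((GF n).filter (fun u => InS lam u ∧ Bru lam u v)).filter (fun u => ¬ Asc u i),
      rhoOp i (atomPoly lam u) = 0 := by
    apply Finset.sum_eq_zero
    intro u hu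
    simp only [Finset.mem_filter, mem_GF] at hu
    obtain ⟨⟨hg, _⟩, hn⟩ := hu
    have := atom_asc lam (GP_sw hg h1 h2) h1 h2 ((asc_sw u i).2 hn)
    rw [sw_sw] at this
    rw [this, rho_rhoBar]
  rw [hz, add_zero]
  have hs : ∑ u ∈ ((GF n).filter (fun u => InS lam u ∧ Bru lam u v)).filter (fun u => Asc u i),
      rhoOp i (atomPoly lam u) =
      ∑ u ∈ ((GF n).filter (fun u => InS lam u ∧ Bru lam u v)).filter (fun u => Asc u i),
        (atomPoly lam u + atomPoly lam ⇑(sw i * u)) := by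
    apply Finset.sum_congr rfl
    intro u hu
    simp only [Finset.mem_filter, mem_GF] at hu
    rw [atom_asc lam hu.1.1 h1 h2 hu.2, rhoBarOp]; ring
  rw [hs, Finset.sum_add_distrib]
  congr 1
  · apply Finset.sum_congr _ (fun _ _ => rfl)
    ext u
    simp only [Finset.mem_filter, mem_GF]
    constructor
    · rintro ⟨⟨hg, hS, hb⟩, hu⟩
      exact ⟨⟨hg, hS, (bru_asc lam u v (hg 0 (Or.inl rfl)) hv0 i h1 ha hu).2 hb⟩, hu⟩
    · rintro ⟨⟨hg, hS, hb⟩, hu⟩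
      exact ⟨⟨hg, hS, (bru_asc lam u v (hg 0 (Or.inl rfl)) hv0 i h1 ha hu).1 hb⟩, hu⟩
  · rw [← Finset.sum_filter_of_ne (p := fun u => InS lam (sw i * u))]
    · apply Finset.sum_bij' (fun u _ => sw i * u) (fun u _ => sw i * u)
      · intro u hu
        simp only [Finset.mem_filter, mem_GF] at hu ⊢
        obtain ⟨⟨⟨hg, hS, hb⟩, hu⟩, hS2⟩ := hu
        refine ⟨⟨GP_sw hg h1 h2, hS2, ?_⟩, ?_⟩
        · exact (bru_desc lam u v (hg 0 (Or.inl rfl)) hv0 i h1 ha hu).2 hb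
        · rw [asc_sw]; simpa using hu
      · intro u hu
        simp only [Finset.mem_filter, mem_GF] at hu ⊢
        obtain ⟨⟨hg, hS, hb⟩, hu⟩ := hu
        have hg2 := GP_sw hg h1 h2
        have ha2 := (asc_sw u i).2 hu
        refine ⟨⟨⟨hg2, inS_sw_of_desc lam hS i hu, ?_⟩, ha2⟩, ?_⟩
        · rw [← bru_desc lam _ v (hg2 0 (Or.inl rfl)) hv0 i h1 ha ha2, sw_sw]
          exact hb
        · rw [sw_sw]; exact hS
      · intro u _; exact sw_sw i u
      · intro u _; exact sw_sw i u
      · intro u _; rfl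
    · intro u hu hne
      simp only [Finset.mem_filter, mem_GF] at hu
      by_contra hc
      exact hne (atom_zero lam hu.1.1 h1 h2 hu.2 hu.1.2.1 hc)

theorem demazure_perm {n : ℕ} (lam : NPartition n) (w : List ℕ) : ∀ (v : Equiv.Perm ℕ)
    (_ : RW n w v), applyOps rhoOp w (lamMonomial lam) =
      ∑ u ∈ (GF n).filter (fun u => InS lam u ∧ Bru lam u v), atomPoly lam u := by
  induction w with
  | nil =>
    intro v hv
    have hv1 : v = 1 := hv.2.1.symm
    subst hv1
    have : (GF n).filter (fun u => InS lam u ∧ Bru lam u 1) = {1} := by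
      ext u
      simp only [Finset.mem_filter, mem_GF, Finset.mem_singleton]
      constructor
      · rintro ⟨hg, hS, hb⟩
        exact bru_one lam hg hS hb
      · rintro rfl
        exact ⟨GP_one n, fun x y _ hxy _ _ => hxy, fun q _ m => le_rfl⟩
    rw [this, Finset.sum_singleton, atom_one]
    rfl
  | cons i w ih =>
    intro v hv
    obtain ⟨h1, h2, hw, ha⟩ := RW_uncons hv
    have := step lam (RW_GP hw) h1 h2 ((asc_sw v i).2 ha)
    rw [sw_sw, ← ih _ hw] at this
    exact this


theorem w0_aux (n : ℕ) : Function.Involutive (fun t : ℕ => if 1 ≤ t ∧ t ≤ n then n + 1 - t else t) := by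
  intro t
  simp only
  split_ifs <;> omega

def w0 (n : ℕ) : Equiv.Perm ℕ := (w0_aux n).toPerm

theorem w0_apply (n t : ℕ) : w0 n t = if 1 ≤ t ∧ t ≤ n then n + 1 - t else t := rfl

theorem w0_symm (n : ℕ) : (w0 n).symm = w0 n := rfl

theorem GP_w0 (n : ℕ) : GP n (w0 n) := by
  intro t ht
  rw [w0_apply, if_neg (by omega)]

theorem w0_not_asc (n i : ℕ) (h1 : 1 ≤ i) (h2 : i + 1 ≤ n) : ¬ Asc (w0 n) i := by
  unfold Asc
  rw [w0_symm, w0_apply, w0_apply, if_pos (by omega), if_pos (by omega)]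
  omega

theorem bru_w0 {n : ℕ} (lam : NPartition n) {u : Equiv.Perm ℕ} (h : GP n u) : Bru lam u (w0 n) := by
  intro q hq m
  obtain ⟨j, _, rfl⟩ := Finset.mem_image.1 hq
  have hqn := zeta_le lam j
  generalize zeta lam j = q at *
  have h1 : cnt (w0 n) q m ≤ q := by
    refine (Finset.card_filter_le _ _).trans ?_
    simp
  have h2 : cnt (w0 n) q m ≤ q + 1 - (n + 1 - m) := by
    have hsub : ((Finset.Icc 1 q).filter fun t => w0 n t ≤ m) ⊆ Finset.Icc (n+1-m) q := by
      intro t ht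
      rw [Finset.mem_filter, Finset.mem_Icc, w0_apply] at ht
      rw [if_pos (by omega)] at ht
      rw [Finset.mem_Icc]; omega
    have := Finset.card_le_card hsub
    simpa [cnt] using this
  have h3 : q ≤ cnt u q m + (n - m) := by
    have e := Finset.card_filter_add_card_filter_not (s := Finset.Icc 1 q) (fun t => u t ≤ m)
    have hle : ((Finset.Icc 1 q).filter fun t => ¬ u t ≤ m).card ≤ n - m := by
      have hsub : ((Finset.Icc 1 q).filter fun t => ¬ u t ≤ m).image u ⊆ Finset.Icc (m+1) n := by
        intro x hx
        obtain ⟨t, ht, rfl⟩ := Finset.mem_image.1 hx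
        rw [Finset.mem_filter, Finset.mem_Icc] at ht
        have := GP_range h ht.1.1 (by omega)
        rw [Finset.mem_Icc]; omega
      have := Finset.card_le_card hsub
      rw [Finset.card_image_of_injective _ u.injective] at this
      simpa using this
    simp only [Nat.card_Icc] at e
    unfold cnt
    omega
  omega

def FS {n : ℕ} (lam : NPartition n) : Poly := ∑ u ∈ (GF n).filter (fun u => InS lam u), atomPoly lam u

theorem FS_eq {n : ℕ} (lam : NPartition n) (w : List ℕ) (hw : RW n w (w0 n)) :
    applyOps rhoOp w (lamMonomial lam) = FS lam := by
  rw [demazure_perm lam w _ hw, FS]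
  apply Finset.sum_congr _ (fun _ _ => rfl)
  apply Finset.filter_congr
  intro u hu
  rw [mem_GF] at hu
  simp [bru_w0 lam hu]

theorem FS_sym {n : ℕ} (lam : NPartition n) (i : ℕ) (h1 : 1 ≤ i) (h2 : i + 1 ≤ n) :
    sOp i (FS lam) = FS lam := by
  obtain ⟨w, hw⟩ := exists_RW (GP_sw (GP_w0 n) h1 h2)
  rw [← FS_eq lam (i :: w) (RW_cons' h1 h2 hw (w0_not_asc n i h1 h2))]
  exact sOp_rho i _

def eF (n : ℕ) : Fin n ≃ {k : ℕ // 1 ≤ k ∧ k ≤ n} where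
  toFun i := ⟨i + 1, by omega, by omega⟩
  invFun k := ⟨k.1 - 1, by have := k.2; omega⟩
  left_inv i := by ext; simp
  right_inv k := by
    have := k.2
    ext; simp; omega

def ext (n : ℕ) (s : Equiv.Perm (Fin n)) : Equiv.Perm ℕ := s.extendDomain (eF n)

theorem ext_mul (n : ℕ) (s t : Equiv.Perm (Fin n)) : ext n (s * t) = ext n s * ext n t :=
  (Equiv.Perm.extendDomain_mul (eF n) s t).symm

theorem ext_apply (n : ℕ) (s : Equiv.Perm (Fin n)) (i : Fin n) : ext n s (i + 1) = s i + 1 := by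
  have := Equiv.Perm.extendDomain_apply_image s (eF n) i
  exact this

theorem ext_out (n : ℕ) (s : Equiv.Perm (Fin n)) : GP n (ext n s) := by
  intro t ht
  exact Equiv.Perm.extendDomain_apply_not_subtype s (eF n) (by omega)

theorem ext_swap (n i : ℕ) (h1 : 1 ≤ i) (h2 : i + 1 ≤ n) :
    ext n (Equiv.swap ⟨i - 1, by omega⟩ ⟨i, by omega⟩) = Equiv.swap i (i+1) := by
  ext t
  by_cases ht : 1 ≤ t ∧ t ≤ n
  · obtain ⟨k, rfl⟩ : ∃ k : Fin n, t = k + 1 := ⟨⟨t - 1, by omega⟩, by simp; omega⟩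
    rw [ext_apply, Equiv.swap_apply_def, Equiv.swap_apply_def]
    simp only [Fin.ext_iff]
    split_ifs <;> first | omega | (simp; omega) | simp
  · rw [ext_out n _ t (by omega), Equiv.swap_apply_of_ne_of_ne] <;> omega

def Alt (n : ℕ) (f : Poly) : Poly :=
  ∑ s : Equiv.Perm (Fin n), ((Equiv.Perm.sign s : ℤ) : Poly) * rename (ext n s) f

theorem Alt_sub (n : ℕ) (f g : Poly) : Alt n (f - g) = Alt n f - Alt n g := by
  unfold Alt
  rw [← Finset.sum_sub_distrib]
  apply Finset.sum_congr rfl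
  intro s _
  rw [map_sub]; ring

theorem Alt_sOp (n i : ℕ) (h1 : 1 ≤ i) (h2 : i + 1 ≤ n) (f : Poly) :
    Alt n (sOp i f) = - Alt n f := by
  unfold Alt sOp
  rw [← ext_swap n i h1 h2, ← Finset.sum_neg_distrib]
  set t : Equiv.Perm (Fin n) := Equiv.swap ⟨i - 1, by omega⟩ ⟨i, by omega⟩ with ht
  apply Fintype.sum_equiv (Equiv.mulRight t)
  intro s
  have hs : Equiv.Perm.sign t = -1 := by
    rw [ht, Equiv.Perm.sign_swap]
    simp [Fin.ext_iff]; omega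
  rw [rename_rename]
  simp only [Equiv.coe_mulRight, Equiv.Perm.sign_mul, hs, ext_mul, Equiv.Perm.coe_mul]
  simp

theorem rename_wp {n : ℕ} (F : Poly) (hF : ∀ i, 1 ≤ i → i + 1 ≤ n → sOp i F = F) (w : List ℕ)
    (hw : Lett n w) : rename (wp w) F = F := by
  induction w with
  | nil => simp [wp]
  | cons i w ih =>
    have h := hw i (by simp)
    have h2 := ih (fun j hj => hw j (by simp [hj]))
    have h3 := hF i h.1 h.2
    have : (⇑(wp (i :: w)) : ℕ → ℕ) = ⇑(Equiv.swap i (i+1)) ∘ ⇑(wp w) := rfl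
    rw [this, ← rename_rename, h2]
    exact h3

theorem rename_ext {n : ℕ} (F : Poly) (hF : ∀ i, 1 ≤ i → i + 1 ≤ n → sOp i F = F)
    (s : Equiv.Perm (Fin n)) : rename (ext n s) F = F := by
  obtain ⟨w, hw⟩ := exists_RW (ext_out n s)
  rw [← hw.2.1]
  exact rename_wp F hF w hw.1

theorem Alt_sym {n : ℕ} (F : Poly) (hF : ∀ i, 1 ≤ i → i + 1 ≤ n → sOp i F = F) (g : Poly) :
    Alt n (g * F) = Alt n g * F := by
  unfold Alt
  rw [Finset.sum_mul]
  apply Finset.sum_congr rfl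
  intro s _
  rw [map_mul, rename_ext F hF]; ring

def mon (n : ℕ) (e : ℕ → ℕ) : Poly := ∏ k ∈ Finset.Icc 1 n, X k ^ e k

theorem sOp_mon {n : ℕ} (e : ℕ → ℕ) (a : ℕ) (h1 : 1 ≤ a) (h2 : a + 1 ≤ n)
    (h : e a = e (a+1)) : sOp a (mon n e) = mon n e := by
  unfold mon sOp
  rw [map_prod]
  simp only [map_pow, rename_X]
  apply Finset.prod_equiv (Equiv.swap a (a+1))
  · intro i
    simp only [Finset.mem_Icc, Equiv.swap_apply_def]
    grind
  · intro i hi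
    congr 1
    simp only [Equiv.swap_apply_def]
    grind

theorem mon_mul (n : ℕ) (e f : ℕ → ℕ) : mon n e * mon n f = mon n (fun k => e k + f k) := by
  unfold mon
  rw [← Finset.prod_mul_distrib]
  exact Finset.prod_congr rfl fun k _ => by rw [pow_add]

theorem mon_single (n i : ℕ) (h1 : 1 ≤ i) (h2 : i ≤ n) :
    mon n (fun k => if k = i then 1 else 0) = X i := by
  unfold mon
  rw [Finset.prod_eq_single i]
  · simp
  · intro b _ hb; simp [hb]
  · intro h; exact absurd (Finset.mem_Icc.2 ⟨h1, h2⟩) h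

theorem Alt_rho (n i : ℕ) (h1 : 1 ≤ i) (h2 : i + 1 ≤ n) (g : Poly) :
    Alt n (mon n (fun k => n - k) * rhoOp i g) = Alt n (mon n (fun k => n - k) * g) := by
  set m := mon n (fun k => if k = i then n - i - 1 else n - k) with hm
  have hd : mon n (fun k => n - k) = X i * m := by
    rw [← mon_single n i h1 (by omega), hm, mon_mul]
    congr 1
    ext k
    split_ifs <;> omega
  have hms : sOp i m = m := by
    apply sOp_mon _ i h1 h2
    rw [if_pos rfl, if_neg (by omega)]; omega
  rw [hd]
  have e1 := Alt_sOp n i h1 h2 (X i * m * rhoOp i g)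
  have e2 := Alt_sOp n i h1 h2 (X i * m * g)
  rw [sOp_mul, sOp_mul, sOp_left, sOp_rho, hms] at e1
  rw [sOp_mul, sOp_mul, sOp_left, hms] at e2
  have e3 : Alt n (X i * m * rhoOp i g - X (i+1) * m * rhoOp i g) =
      Alt n (X i * m * g - X (i+1) * m * sOp i g) := by
    congr 1
    linear_combination m * rho_spec i g
  rw [Alt_sub, Alt_sub, e1, e2] at e3
  have : (2 : Poly) * Alt n (X i * m * rhoOp i g) = 2 * Alt n (X i * m * g) := by
    linear_combination e3
  exact mul_left_cancel₀ two_ne_zero this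

theorem Alt_word (n : ℕ) (w : List ℕ) (hw : Lett n w) (g : Poly) :
    Alt n (mon n (fun k => n - k) * applyOps rhoOp w g) = Alt n (mon n (fun k => n - k) * g) := by
  induction w with
  | nil => rfl
  | cons i w ih =>
    have h := hw i (by simp)
    simp only [applyOps]
    rw [Alt_rho n i h.1 h.2, ih (fun j hj => hw j (by simp [hj]))]

theorem prod_Icc_fin {M : Type*} [CommMonoid M] (n : ℕ) (g : ℕ → M) :
    ∏ k ∈ Finset.Icc 1 n, g k = ∏ j : Fin n, g (j + 1) := by
  induction n with
  | zero => simp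
  | succ n ih => rw [Finset.prod_Icc_succ_top (by omega), Fin.prod_univ_castSucc, ih]; simp

def altM (n : ℕ) (e : ℕ → ℕ) : Matrix (Fin n) (Fin n) Poly :=
  Matrix.of fun i j => X ((i : ℕ) + 1) ^ (e ((j : ℕ) + 1) + (n - ((j : ℕ) + 1)))

theorem Alt_mon (n : ℕ) (e : ℕ → ℕ) :
    Alt n (mon n (fun k => n - k) * mon n e) = (altM n e).det := by
  rw [mon_mul, Matrix.det_apply', Alt]
  apply Finset.sum_congr rfl
  intro s _
  congr 1
  rw [mon, map_prod, prod_Icc_fin]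
  apply Finset.prod_congr rfl
  intro j _
  rw [map_pow, rename_X, ext_apply, altM, Matrix.of_apply, add_comm (n - _)]

theorem FS_alt {n : ℕ} (lam : NPartition n) :
    (altM n (fun _ => 0)).det * FS lam = (altM n lam.part).det := by
  obtain ⟨w, hw⟩ := exists_RW (GP_w0 n)
  have h := Alt_word n w hw.1 (lamMonomial lam)
  rw [FS_eq lam w hw, Alt_sym _ (FS_sym lam)] at h
  have hl : lamMonomial lam = mon n lam.part := rfl
  rw [hl, Alt_mon] at h
  rw [← h, ← Alt_mon]
  have : mon n (fun _ => 0) = 1 := by simp [mon]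
  rw [this, mul_one]

theorem det_succ_op {R : Type*} [CommRing R] {m : ℕ} (A B : Matrix (Fin (m+1)) (Fin (m+1)) R)
    (c : Fin m → R) (h0 : ∀ i, A i (Fin.last m) = B i (Fin.last m))
    (h1 : ∀ i (j : Fin m), A i j.castSucc = B i j.castSucc + c j * A i j.succ) :
    A.det = B.det := by
  rw [← Matrix.det_submatrix_equiv_self Fin.revPerm A, ← Matrix.det_submatrix_equiv_self Fin.revPerm B]
  apply Matrix.det_eq_of_forall_col_eq_smul_add_pred (fun j => c j.rev)
  · intro i
    simpa using h0 _
  · intro i j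
    simpa [Fin.rev_succ, Fin.rev_castSucc] using h1 i.rev j.rev

theorem geom_aux (x y : Poly) (a b r : ℕ) (h : b ≤ a) :
    x ^ (a + r + 1) - y ^ (a - b + 1) * x ^ (b + r) =
      (x - y) * ∑ k ∈ Finset.Icc b a, y ^ (a - k) * x ^ (k + r) := by
  induction a, h using Nat.le_induction with
  | base => simp; ring
  | succ a hab ih =>
    rw [Finset.sum_Icc_succ_top (by omega)]
    have : ∑ k ∈ Finset.Icc b a, y ^ (a + 1 - k) * x ^ (k + r) =
        y * ∑ k ∈ Finset.Icc b a, y ^ (a - k) * x ^ (k + r) := by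
      rw [Finset.mul_sum]
      apply Finset.sum_congr rfl
      intro k hk
      rw [Finset.mem_Icc] at hk
      rw [show a + 1 - k = (a - k) + 1 by omega]; ring
    rw [this, mul_add, ← mul_assoc, mul_comm (x - y) y, mul_assoc, ← ih,
      show a + 1 - b + 1 = (a - b + 1) + 1 by omega]
    simp
    ring

theorem det_sum_cols {m : ℕ} (s : Fin m → Finset ℕ) (g : Fin m → Fin m → ℕ → Poly) :
    (Matrix.of fun i j => ∑ k ∈ s j, g i j k).det =
      ∑ f ∈ Fintype.piFinset s, (Matrix.of fun i j => g i j (f j)).det := by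
  rw [← Matrix.det_transpose]
  have := (Matrix.detRowAlternating (n := Fin m) (R := Poly)).toMultilinearMap.map_sum_finset
    (fun (j : Fin m) (k : ℕ) => (fun i => g i j k)) s
  have e1 : (Matrix.of fun i j => ∑ k ∈ s j, g i j k).transpose =
     (fun j => ∑ k ∈ s j, (fun i => g i j k)) := by
    ext j i : 2
    simp
  rw [e1]
  refine this.trans ?_
  apply Finset.sum_congr rfl
  intro f _
  rw [← Matrix.det_transpose]
  rfl

theorem det_step (m : ℕ) (e : ℕ → ℕ) (he : ∀ k, 1 ≤ k → e (k + 1) ≤ e k) :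
    (altM (m + 1) e).det = X (m + 1) ^ e (m + 1) * (∏ i : Fin m, (X ((i : ℕ) + 1) - X (m + 1))) *
      ∑ f ∈ Fintype.piFinset (fun j : Fin m => Finset.Icc (e ((j : ℕ) + 2)) (e ((j : ℕ) + 1))),
        (∏ j : Fin m, X (m + 1) ^ (e ((j : ℕ) + 1) - f j)) *
          (Matrix.of fun i j : Fin m => (X ((i : ℕ) + 1) : Poly) ^ (f j + (m - ((j : ℕ) + 1)))).det := by
  set y : Poly := X (m + 1) with hy
  let c : Fin m → Poly := fun j => y ^ (e ((j : ℕ) + 1) - e ((j : ℕ) + 2) + 1)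
  let B : Matrix (Fin (m+1)) (Fin (m+1)) Poly := Matrix.of fun i j =>
    if h : (j : ℕ) < m then altM (m+1) e i j - c ⟨j, h⟩ * altM (m+1) e i ⟨j + 1, by omega⟩
      else altM (m+1) e i j
  have hAB : (altM (m + 1) e).det = B.det := by
    apply det_succ_op _ _ c
    · intro i; simp [B]
    · intro i j
      simp [B]
      exact (sub_add_cancel _ _).symm
  have hB : ∀ (i : Fin (m+1)) (j : Fin m), B i j.castSucc = (X ((i : ℕ) + 1) - y) *
      ∑ k ∈ Finset.Icc (e ((j : ℕ) + 2)) (e ((j : ℕ) + 1)),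
        y ^ (e ((j : ℕ) + 1) - k) * X ((i : ℕ) + 1) ^ (k + (m - ((j : ℕ) + 1))) := by
    intro i j
    rw [← geom_aux _ _ _ _ _ (he _ (by omega))]
    simp [B, altM, c]
    rw [show m - (j : ℕ) = m - ((j : ℕ) + 1) + 1 by omega]
    rfl
  rw [hAB, Matrix.det_succ_row _ (Fin.last m), Fin.sum_univ_castSucc]
  have h0 : ∀ j : Fin m, B (Fin.last m) j.castSucc = 0 := by
    intro j
    rw [hB]; simp [hy]
  simp only [h0]
  have hl : B (Fin.last m) (Fin.last m) = y ^ e (m + 1) := by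
    simp [B, altM, hy]
  rw [hl]
  have hs : (B.submatrix (Fin.last m).succAbove (Fin.last m).succAbove) =
      Matrix.of fun i j : Fin m => (X ((i : ℕ) + 1) - y) * (Matrix.of fun i j : Fin m =>
        ∑ k ∈ Finset.Icc (e ((j : ℕ) + 2)) (e ((j : ℕ) + 1)),
        y ^ (e ((j : ℕ) + 1) - k) * X ((i : ℕ) + 1) ^ (k + (m - ((j : ℕ) + 1)))) i j := by
    ext i j : 2
    simp only [Matrix.submatrix_apply, Fin.succAbove_last, hB, Matrix.of_apply]
    simp
  rw [hs, Matrix.det_mul_column, det_sum_cols]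
  have h2 : ((-1 : Poly)) ^ (((Fin.last m : Fin (m+1)) : ℕ) + ((Fin.last m : Fin (m+1)) : ℕ)) = 1 := by
    rw [← two_mul, pow_mul]; simp
  rw [h2]
  simp only [mul_zero, zero_mul, Finset.sum_const_zero, zero_add, one_mul]
  rw [mul_assoc]
  congr 2
  apply Finset.sum_congr rfl
  intro f _
  rw [← Matrix.det_mul_row]
  rfl

def IL {m : ℕ} (lam : NPartition (m + 1)) (mu : NPartition m) : Prop :=
  ∀ k, 1 ≤ k → k ≤ m → lam.part (k + 1) ≤ mu.part k ∧ mu.part k ≤ lam.part k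

def Ex {m : ℕ} (lam : NPartition (m + 1)) (mu : NPartition m) (T : ℕ → ℕ → ℕ) (c i : ℕ) : ℕ :=
  if InShape mu c i then T c i else if InShape lam c i then m + 1 else 0

def Re {m : ℕ} (mu : NPartition m) (T : ℕ → ℕ → ℕ) (c i : ℕ) : ℕ :=
  if InShape mu c i then T c i else 0

def Tab {m : ℕ} (mu : NPartition m) (T : ℕ → ℕ → ℕ) : Prop := IsSSYT mu T ∧ ZeroOutside mu T

theorem IL.sub {m : ℕ} {lam : NPartition (m + 1)} {mu : NPartition m} (h : IL lam mu) {c i : ℕ}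
    (hc : InShape mu c i) : InShape lam c i := by
  obtain ⟨h1, h2, h3, h4⟩ := hc
  have := h i h2 h3
  exact ⟨h1, h2, by omega, by omega⟩

theorem InShape.left {m : ℕ} {lam : NPartition m} {c i : ℕ} (h : InShape lam (c + 1) i)
    (hc : 1 ≤ c) : InShape lam c i := by
  obtain ⟨h1, h2, h3, h4⟩ := h
  exact ⟨hc, h2, h3, by omega⟩

theorem InShape.up {m : ℕ} {lam : NPartition m} {c i : ℕ} (h : InShape lam c (i + 1))
    (hi : 1 ≤ i) : InShape lam c i := by
  obtain ⟨h1, h2, h3, h4⟩ := h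
  have := lam.antitone hi (Nat.le_succ i)
  exact ⟨h1, hi, by omega, le_trans h4 this⟩

theorem Ex_tab {m : ℕ} {lam : NPartition (m + 1)} {mu : NPartition m} (h : IL lam mu)
    {T : ℕ → ℕ → ℕ} (hT : Tab mu T) : Tab lam (Ex lam mu T) := by
  obtain ⟨⟨h1, h2, h3⟩, h0⟩ := hT
  have hle : ∀ c i, Ex lam mu T c i ≤ m + 1 := by
    intro c i
    unfold Ex
    split_ifs with a b
    · have := h1 c i a; omega
    · omega
    · omega
  have hz : ∀ c i, ¬ InShape lam c i → Ex lam mu T c i = 0 := by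
    intro c i hc
    unfold Ex
    rw [if_neg (fun a => hc (h.sub a)), if_neg hc]
  refine ⟨⟨?_, ?_, ?_⟩, hz⟩
  · intro c i hc
    refine ⟨?_, hle c i⟩
    unfold Ex
    split_ifs with a
    · exact (h1 c i a).1
    · omega
  · intro c i hc
    by_cases a : InShape mu (c + 1) i
    · rcases Nat.eq_zero_or_pos c with rfl | hc0
      · rw [hz 0 i (by rintro ⟨q, _⟩; omega)]; omega
      · have := h2 c i a
        unfold Ex
        rwa [if_pos a, if_pos (a.left hc0)]
    · have : Ex lam mu T (c + 1) i = m + 1 := by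
        unfold Ex
        rw [if_neg a, if_pos hc]
      rw [this]; exact hle c i
  · intro c i hc
    rcases Nat.eq_zero_or_pos i with rfl | hi0
    · rw [hz c 0 (by rintro ⟨_, q, _⟩; omega)]
      unfold Ex
      split_ifs with a
      · exact (h1 c _ a).1
      · omega
    · by_cases a : InShape mu c (i + 1)
      · have := h3 c i a
        unfold Ex
        rwa [if_pos a, if_pos (a.up hi0)]
      · have e1 : Ex lam mu T c (i + 1) = m + 1 := by
          unfold Ex
          rw [if_neg a, if_pos hc]
        obtain ⟨q1, q2, q3, q4⟩ := hc
        have b : InShape mu c i := ⟨q1, hi0, by omega, le_trans q4 (h i hi0 (by omega)).1⟩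
        have e2 : Ex lam mu T c i = T c i := by
          unfold Ex
          rw [if_pos b]
        have := h1 c i b
        omega

theorem Ex_shape {m : ℕ} {lam : NPartition (m + 1)} {mu : NPartition m} (h : IL lam mu)
    {T : ℕ → ℕ → ℕ} (hT : Tab mu T) (c i : ℕ) :
    InShape mu c i ↔ InShape lam c i ∧ Ex lam mu T c i ≤ m := by
  constructor
  · intro a
    refine ⟨h.sub a, ?_⟩
    unfold Ex
    rw [if_pos a]
    exact (hT.1.1 c i a).2
  · rintro ⟨a, b⟩
    by_contra hc
    unfold Ex at b
    rw [if_neg hc, if_pos a] at b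
    omega

theorem Re_Ex {m : ℕ} {lam : NPartition (m + 1)} {mu : NPartition m}
    {T : ℕ → ℕ → ℕ} (hT : Tab mu T) : Re mu (Ex lam mu T) = T := by
  funext c i
  unfold Re Ex
  split_ifs with a
  · rfl
  · exact (hT.2 c i a).symm

theorem Tab.row {m : ℕ} {lam : NPartition m} {T : ℕ → ℕ → ℕ} (hT : Tab lam T) {i c d : ℕ}
    (hcd : c ≤ d) (hd : d = 0 ∨ InShape lam d i) : T c i ≤ T d i := by
  induction d, hcd using Nat.le_induction with
  | base => exact le_rfl
  | succ d hcd ih =>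
    rcases hd with hd | hd
    · omega
    · refine le_trans (ih ?_) (hT.1.2.1 d i hd)
      rcases Nat.eq_zero_or_pos d with h0 | h0
      · exact Or.inl h0
      · exact Or.inr (hd.left h0)

theorem Tab.ge {m : ℕ} {lam : NPartition m} {T : ℕ → ℕ → ℕ} (hT : Tab lam T) {i c : ℕ}
    (hd : InShape lam c i) : i ≤ T c i := by
  induction i with
  | zero => omega
  | succ i ih =>
    have := hT.1.2.2 c i hd
    rcases Nat.eq_zero_or_pos i with h0 | h0
    · omega
    · have := ih (hd.up h0); omega

/-- Restriction properties, when `mu` marks the entries at most `m`. -/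
theorem Re_tab {m : ℕ} {lam : NPartition (m + 1)} {mu : NPartition m} (h : IL lam mu)
    {T : ℕ → ℕ → ℕ} (hT : Tab lam T)
    (hmu : ∀ c i, InShape mu c i ↔ InShape lam c i ∧ T c i ≤ m) :
    Tab mu (Re mu T) ∧ Ex lam mu (Re mu T) = T := by
  have hle : ∀ c i, Re mu T c i ≤ T c i := by
    intro c i; unfold Re; split_ifs <;> omega
  have heq : ∀ c i, InShape mu c i → Re mu T c i = T c i := by
    intro c i hc; unfold Re; rw [if_pos hc]
  refine ⟨⟨⟨?_, ?_, ?_⟩, ?_⟩, ?_⟩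
  · intro c i hc
    rw [heq c i hc]
    exact ⟨(hT.1.1 c i (h.sub hc)).1, ((hmu c i).1 hc).2⟩
  · intro c i hc
    rw [heq _ i hc]
    exact (hle c i).trans (hT.1.2.1 c i (h.sub hc))
  · intro c i hc
    rw [heq c _ hc]
    exact (hle c i).trans_lt (hT.1.2.2 c i (h.sub hc))
  · intro c i hc; unfold Re; rw [if_neg hc]
  · funext c i
    unfold Ex
    split_ifs with a b
    · exact heq c i a
    · have h1 := hmu c i
      have h2 := hT.1.1 c i b
      by_contra hne
      exact a (h1.2 ⟨b, by omega⟩)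
    · exact (hT.2 c i b).symm

def IntF {m : ℕ} (lam : NPartition (m + 1)) : Finset (Fin m → ℕ) :=
  Fintype.piFinset (fun j : Fin m => Finset.Icc (lam.part ((j : ℕ) + 2)) (lam.part ((j : ℕ) + 1)))

theorem mem_IntF {m : ℕ} (lam : NPartition (m + 1)) (f : Fin m → ℕ) :
    f ∈ IntF lam ↔ ∀ j : Fin m, lam.part ((j : ℕ) + 2) ≤ f j ∧ f j ≤ lam.part ((j : ℕ) + 1) := by
  simp [IntF]

def ext0 {m : ℕ} (f : Fin m → ℕ) (k : ℕ) : ℕ := if h : 1 ≤ k ∧ k ≤ m then f ⟨k - 1, by omega⟩ else 0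

theorem ext0_succ {m : ℕ} (f : Fin m → ℕ) (j : Fin m) : ext0 f ((j : ℕ) + 1) = f j := by
  unfold ext0
  rw [dif_pos (by omega)]
  simp

def zp (m : ℕ) : NPartition m := ⟨fun _ => 0, fun _ _ _ _ => le_rfl, fun _ _ => rfl⟩

theorem ext0_IL {m : ℕ} {lam : NPartition (m + 1)} {f : Fin m → ℕ} (h : f ∈ IntF lam) (k : ℕ)
    (h1 : 1 ≤ k) (h2 : k ≤ m) : lam.part (k + 1) ≤ ext0 f k ∧ ext0 f k ≤ lam.part k := by
  obtain ⟨k, rfl⟩ : ∃ j, k = j + 1 := ⟨k - 1, by omega⟩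
  have := (mem_IntF lam f).1 h ⟨k, by omega⟩
  rw [← ext0_succ f ⟨k, by omega⟩] at this
  exact this

theorem ext0_anti {m : ℕ} {lam : NPartition (m + 1)} {f : Fin m → ℕ} (h : f ∈ IntF lam) :
    ∀ ⦃i j : ℕ⦄, 1 ≤ i → i ≤ j → ext0 f j ≤ ext0 f i := by
  intro i j hi hij
  induction j, hij using Nat.le_induction with
  | base => exact le_rfl
  | succ j hij ih =>
    refine le_trans ?_ ih
    by_cases hj : j + 1 ≤ m
    · exact (ext0_IL h (j + 1) (by omega) hj).2.trans (ext0_IL h j (by omega) (by omega)).1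
    · unfold ext0
      rw [dif_neg (by omega)]; omega

def mu {m : ℕ} (lam : NPartition (m + 1)) (f : Fin m → ℕ) : NPartition m :=
  if h : f ∈ IntF lam then ⟨ext0 f, ext0_anti h, by
    intro i hi; unfold ext0; rw [dif_neg (by omega)]⟩ else zp m

theorem mu_part {m : ℕ} {lam : NPartition (m + 1)} {f : Fin m → ℕ} (h : f ∈ IntF lam) :
    (mu lam f).part = ext0 f := by
  unfold mu; rw [dif_pos h]

theorem mu_IL {m : ℕ} {lam : NPartition (m + 1)} {f : Fin m → ℕ} (h : f ∈ IntF lam) :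
    IL lam (mu lam f) := by
  intro k h1 h2
  rw [mu_part h]
  exact ext0_IL h k h1 h2

theorem mu_inj {m : ℕ} {lam : NPartition (m + 1)} {f g : Fin m → ℕ} (hf : f ∈ IntF lam)
    (hg : g ∈ IntF lam) (h : ∀ c i, InShape (mu lam f) c i ↔ InShape (mu lam g) c i) : f = g := by
  funext j
  have := fun c => h c ((j : ℕ) + 1)
  simp only [InShape, mu_part hf, mu_part hg, ext0_succ] at this
  have h1 := this (f j)
  have h2 := this (g j)
  have := j.2
  omega

theorem exists_f {m : ℕ} {lam : NPartition (m + 1)} {T : ℕ → ℕ → ℕ} (hT : Tab lam T) :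
    ∃ f ∈ IntF lam, ∀ c i, InShape (mu lam f) c i ↔ InShape lam c i ∧ T c i ≤ m := by
  let f : Fin m → ℕ := fun j =>
    Nat.findGreatest (fun c => T c ((j : ℕ) + 1) ≤ m) (lam.part ((j : ℕ) + 1))
  have hf : f ∈ IntF lam := by
    rw [mem_IntF]
    intro j
    refine ⟨?_, Nat.findGreatest_le _⟩
    apply Nat.le_findGreatest
    · exact lam.antitone (by omega) (by omega)
    · rcases Nat.eq_zero_or_pos (lam.part ((j : ℕ) + 2)) with h0 | h0
      · rw [h0, hT.2 0 _ (by rintro ⟨q, _⟩; omega)]; omega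
      · have hs : InShape lam (lam.part ((j : ℕ) + 2)) ((j : ℕ) + 1 + 1) :=
          ⟨h0, by omega, by omega, le_rfl⟩
        have h1 := hT.1.2.2 _ _ hs
        have h2 := hT.1.1 _ _ hs
        omega
  refine ⟨f, hf, ?_⟩
  intro c i
  constructor
  · intro hc
    have hl := (mu_IL hf).sub hc
    refine ⟨hl, ?_⟩
    obtain ⟨q1, q2, q3, q4⟩ := hc
    obtain ⟨j, rfl⟩ : ∃ j : Fin m, i = j + 1 := ⟨⟨i - 1, by omega⟩, by simp; omega⟩
    rw [mu_part hf, ext0_succ] at q4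
    have hfj : T (f j) ((j : ℕ) + 1) ≤ m :=
      Nat.findGreatest_spec (P := fun c => T c ((j : ℕ) + 1) ≤ m) (Nat.zero_le _)
        (by
          show T 0 _ ≤ m
          rw [hT.2 0 _ (by rintro ⟨q, _⟩; omega)]; omega)
    refine le_trans (hT.row q4 (Or.inr ⟨by omega, by omega, by omega, ?_⟩)) hfj
    exact Nat.findGreatest_le _
  · rintro ⟨hl, hle⟩
    have hg := hT.ge hl
    obtain ⟨q1, q2, q3, q4⟩ := hl
    obtain ⟨j, rfl⟩ : ∃ j : Fin m, i = j + 1 := ⟨⟨i - 1, by omega⟩, by simp; omega⟩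
    refine ⟨q1, q2, by omega, ?_⟩
    rw [mu_part hf, ext0_succ]
    exact Nat.le_findGreatest q4 hle

theorem weight_rows {m : ℕ} (lam : NPartition m) (T : ℕ → ℕ → ℕ) :
    weight lam T = ∏ i ∈ Finset.Icc 1 m, ∏ c ∈ Finset.Icc 1 (lam.part i), X (T c i) := by
  unfold weight boxes
  rw [Finset.prod_filter, Finset.prod_product_right]
  apply Finset.prod_congr rfl
  intro i hi
  rw [Finset.mem_Icc] at hi
  rw [← Finset.prod_filter]
  apply Finset.prod_congr
  · ext c
    have := lam.antitone le_rfl hi.1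
    simp only [Finset.mem_filter, Finset.mem_Icc]
    omega
  · intros; rfl

theorem weight_Ex {m : ℕ} {lam : NPartition (m + 1)} {f : Fin m → ℕ} (hf : f ∈ IntF lam)
    (T : ℕ → ℕ → ℕ) : weight lam (Ex lam (mu lam f) T) =
      X (m + 1) ^ lam.part (m + 1) * ((∏ j : Fin m, X (m + 1) ^ (lam.part ((j : ℕ) + 1) - f j)) *
        weight (mu lam f) T) := by
  rw [weight_rows, weight_rows, Finset.prod_Icc_succ_top (by omega), mul_comm]
  congr 1
  · rw [Finset.prod_congr rfl (g := fun _ => X (m + 1))]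
    · simp
    · intro c hc
      rw [Finset.mem_Icc] at hc
      unfold Ex
      rw [if_neg (by rintro ⟨_, _, q, _⟩; omega), if_pos ⟨hc.1, by omega, by omega, hc.2⟩]
  · rw [prod_Icc_fin, prod_Icc_fin, ← Finset.prod_mul_distrib]
    apply Finset.prod_congr rfl
    intro j _
    have hj := mu_IL hf ((j : ℕ) + 1) (by omega) (by omega)
    have e : f j = (mu lam f).part ((j : ℕ) + 1) := by rw [mu_part hf, ext0_succ]
    rw [e]
    have hd : Finset.Icc 1 (lam.part ((j : ℕ) + 1)) = Finset.Icc 1 ((mu lam f).part ((j : ℕ) + 1)) ∪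
        Finset.Ioc ((mu lam f).part ((j : ℕ) + 1)) (lam.part ((j : ℕ) + 1)) := by
      ext c; simp only [Finset.mem_union, Finset.mem_Icc, Finset.mem_Ioc]; omega
    rw [hd, Finset.prod_union, mul_comm]
    · congr 1
      · rw [Finset.prod_congr rfl (g := fun _ => X (m + 1))]
        · simp
        · intro c hc
          rw [Finset.mem_Ioc] at hc
          unfold Ex
          rw [if_neg (by rintro ⟨_, _, _, q⟩; omega), if_pos ⟨by omega, by omega, by omega, hc.2⟩]
      · apply Finset.prod_congr rfl
        intro c hc
        rw [Finset.mem_Icc] at hc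
        unfold Ex
        rw [if_pos ⟨hc.1, by omega, by omega, hc.2⟩]
    · rw [Finset.disjoint_left]
      intro c h1 h2
      rw [Finset.mem_Icc] at h1
      rw [Finset.mem_Ioc] at h2
      omega

theorem tab_finite {m : ℕ} (lam : NPartition m) : {T : ℕ → ℕ → ℕ | Tab lam T}.Finite := by
  apply Set.Finite.of_injOn
    (f := fun (T : ℕ → ℕ → ℕ) (b : boxes lam) => Fin.ofNat (m + 1) (T b.1.1 b.1.2))
    (t := Set.univ) (fun _ _ => Set.mem_univ _) _ Set.finite_univ
  intro T hT T' hT' h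
  funext c i
  by_cases hc : InShape lam c i
  · have hb : (c, i) ∈ boxes lam := by
      obtain ⟨q1, q2, q3, q4⟩ := hc
      have := lam.antitone le_rfl q2
      simp only [boxes, Finset.mem_filter, Finset.mem_product, Finset.mem_Icc]
      omega
    have := congrArg Fin.val (congrFun h ⟨(c, i), hb⟩)
    simp only [Fin.ofNat] at this
    have h1 := (hT.1.1 c i hc).2
    have h2 := (hT'.1.1 c i hc).2
    rwa [Nat.mod_eq_of_lt (by omega), Nat.mod_eq_of_lt (by omega)] at this
  · rw [hT.2 c i hc, hT'.2 c i hc]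

def SF {m : ℕ} (lam : NPartition m) : Finset (ℕ → ℕ → ℕ) := (tab_finite lam).toFinset

theorem mem_SF {m : ℕ} {lam : NPartition m} {T : ℕ → ℕ → ℕ} : T ∈ SF lam ↔ Tab lam T := by
  simp [SF]

def Sch {m : ℕ} (lam : NPartition m) : Poly := ∑ T ∈ SF lam, weight lam T

theorem Sch_branch {m : ℕ} (lam : NPartition (m + 1)) :
    Sch lam = ∑ f ∈ IntF lam, X (m + 1) ^ lam.part (m + 1) *
      ((∏ j : Fin m, X (m + 1) ^ (lam.part ((j : ℕ) + 1) - f j)) * Sch (mu lam f)) := by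
  unfold Sch
  simp only [Finset.mul_sum]
  rw [Finset.sum_sigma']
  symm
  apply Finset.sum_bij (fun (p : (_ : Fin m → ℕ) × (ℕ → ℕ → ℕ)) _ => Ex lam (mu lam p.1) p.2)
  · rintro ⟨f, T⟩ h
    rw [Finset.mem_sigma, mem_SF] at h
    rw [mem_SF]
    exact Ex_tab (mu_IL h.1) h.2
  · rintro ⟨f, T⟩ h ⟨g, T'⟩ h' he
    rw [Finset.mem_sigma, mem_SF] at h h'
    dsimp only at h h' he
    have : f = g := by
      apply mu_inj h.1 h'.1
      intro c i
      rw [Ex_shape (mu_IL h.1) h.2, Ex_shape (mu_IL h'.1) h'.2, he]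
    subst this
    rw [← Re_Ex (lam := lam) h.2, he, Re_Ex h'.2]
  · intro T hT
    rw [mem_SF] at hT
    obtain ⟨f, hf, hs⟩ := exists_f hT
    have := Re_tab (mu_IL hf) hT hs
    exact ⟨⟨f, Re (mu lam f) T⟩, by rw [Finset.mem_sigma, mem_SF]; exact ⟨hf, this.1⟩, this.2⟩
  · rintro ⟨f, T⟩ h
    rw [Finset.mem_sigma] at h
    rw [weight_Ex h.1]

theorem Sch_zp {m : ℕ} (lam : NPartition m) (h : ∀ i, 1 ≤ i → lam.part i = 0) : Sch lam = 1 := by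
  have hs : ∀ c i, ¬ InShape lam c i := by
    rintro c i ⟨q1, q2, q3, q4⟩
    have := h i q2
    omega
  have : SF lam = {fun _ _ => 0} := by
    ext T
    rw [mem_SF, Finset.mem_singleton]
    constructor
    · intro hT; funext c i; exact hT.2 c i (hs c i)
    · rintro rfl
      exact ⟨⟨fun c i a => (hs _ _ a).elim, fun c i a => (hs _ _ a).elim,
        fun c i a => (hs _ _ a).elim⟩, fun _ _ _ => rfl⟩
  rw [Sch, this, Finset.sum_singleton, weight_rows]
  apply Finset.prod_eq_one
  intro i hi
  rw [Finset.mem_Icc] at hi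
  rw [h i hi.1]; simp

def Van : ℕ → Poly
  | 0 => 1
  | m + 1 => (∏ i : Fin m, (X ((i : ℕ) + 1) - X (m + 1))) * Van m

theorem Van_ne (m : ℕ) : Van m ≠ 0 := by
  induction m with
  | zero => exact one_ne_zero
  | succ m ih =>
    refine mul_ne_zero (Finset.prod_ne_zero_iff.2 ?_) ih
    intro i _
    rw [sub_ne_zero]
    intro h
    have := X_injective h
    omega

theorem alt_Sch (m : ℕ) (lam : NPartition m) : (altM m lam.part).det = Van m * Sch lam := by
  induction m with
  | zero => rw [Sch_zp lam (fun i hi => lam.outside i hi)]; simp [Van]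
  | succ m ih =>
    rw [det_step m lam.part (fun k hk => lam.antitone hk (Nat.le_succ k)), Sch_branch, Van,
      ← Finset.mul_sum]
    have : ∀ f ∈ IntF lam, (∏ j : Fin m, (X (m + 1) : Poly) ^ (lam.part ((j : ℕ) + 1) - f j)) *
          (Matrix.of fun i j : Fin m => (X ((i : ℕ) + 1) : Poly) ^ (f j + (m - ((j : ℕ) + 1)))).det
        = Van m * ((∏ j : Fin m, (X (m + 1) : Poly) ^ (lam.part ((j : ℕ) + 1) - f j)) *
            Sch (mu lam f)) := by
      intro f hf
      have h1 := ih (mu lam f)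
      have h2 : altM m (mu lam f).part =
          (Matrix.of fun i j : Fin m => (X ((i : ℕ) + 1) : Poly) ^ (f j + (m - ((j : ℕ) + 1)))) := by
        ext i j : 2
        rw [altM, Matrix.of_apply, Matrix.of_apply, mu_part hf, ext0_succ]
      rw [← h2, h1]; ring
    rw [show (Fintype.piFinset (fun j : Fin m =>
      Finset.Icc (lam.part ((j : ℕ) + 2)) (lam.part ((j : ℕ) + 1)))) = IntF lam from rfl,
      Finset.sum_congr rfl this, ← Finset.mul_sum]
    ring

theorem FS_eq_Sch (lam : NPartition n) : FS lam = Sch lam := by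
  have h0 : (altM n (fun _ => 0)).det = Van n := by
    have := alt_Sch n (zp n)
    rw [Sch_zp _ (fun _ _ => rfl), mul_one] at this
    exact this
  have := FS_alt lam
  rw [h0, alt_Sch] at this
  exact mul_left_cancel₀ (Van_ne n) this

theorem exists_perm {p : ℕ → ℕ} (h1 : IsNPerm n p) (h2 : ∀ t, t = 0 ∨ n < t → p t = t) :
    ∃ u : Equiv.Perm ℕ, ⇑u = p := by
  have hb : Function.Bijective p := by
    constructor
    · intro a b hab
      by_cases ha : 1 ≤ a ∧ a ≤ n
      · have h3 := h1.mapsTo (show a ∈ Set.Icc 1 n from ha)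
        by_cases hb : 1 ≤ b ∧ b ≤ n
        · exact h1.injOn ha hb hab
        · rw [Set.mem_Icc, hab, h2 b (by omega)] at h3
          omega
      · by_cases hb : 1 ≤ b ∧ b ≤ n
        · have h3 := h1.mapsTo (show b ∈ Set.Icc 1 n from hb)
          rw [Set.mem_Icc, ← hab, h2 a (by omega)] at h3
          omega
        · rwa [h2 a (by omega), h2 b (by omega)] at hab
    · intro b
      by_cases hb : 1 ≤ b ∧ b ≤ n
      · obtain ⟨a, _, ha⟩ := h1.surjOn (show b ∈ Set.Icc 1 n from hb)
        exact ⟨a, ha⟩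
      · exact ⟨b, h2 b (by omega)⟩
  exact ⟨Equiv.ofBijective p hb, rfl⟩

theorem finsum_bridge (A : Set (ℕ → ℕ)) (Q : Equiv.Perm ℕ → Prop) [DecidablePred Q] (F : (ℕ → ℕ) → Poly)
    (hA : ∀ p ∈ A, IsNPerm n p ∧ ∀ t, t = 0 ∨ n < t → p t = t)
    (hQ : ∀ u : Equiv.Perm ℕ, GP n u → (⇑u ∈ A ↔ Q u)) :
    ∑ᶠ p ∈ A, F p = ∑ u ∈ (GF n).filter (fun u => Q u), F u := by
  have e : A = (fun u : Equiv.Perm ℕ => ⇑u) '' (((GF n).filter (fun u => Q u) : Finset _) : Set _) := by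
    ext p
    simp only [Set.mem_image, Finset.mem_coe, Finset.mem_filter, mem_GF]
    constructor
    · intro hp
      obtain ⟨u, rfl⟩ := exists_perm (hA p hp).1 (hA p hp).2
      have hu : GP n u := (hA _ hp).2
      exact ⟨u, ⟨hu, (hQ u hu).1 hp⟩, rfl⟩
    · rintro ⟨u, ⟨hu, hq⟩, rfl⟩
      exact (hQ u hu).2 hq
  rw [e, finsum_mem_image (DFunLike.coe_injective.injOn), finsum_mem_coe_finset]

theorem keyTab_congr (lam : NPartition n) {p q : ℕ → ℕ} (h : ∀ t, 1 ≤ t → t ≤ n → p t = q t) :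
    keyTab lam p = keyTab lam q := by
  funext j i
  unfold keyTab
  have : (Finset.Icc 1 (zeta lam j)).image p = (Finset.Icc 1 (zeta lam j)).image q := by
    apply Finset.image_congr
    intro t ht
    rw [Finset.mem_coe, Finset.mem_Icc] at ht
    exact h t ht.1 (ht.2.trans (zeta_le lam j))
  rw [this]

theorem reduced_congr {p q : ℕ → ℕ} (h : ∀ t, 1 ≤ t → t ≤ n → p t = q t) {w : List ℕ}
    (hw : IsReducedWord n w p) : IsReducedWord n w q := by
  refine ⟨⟨hw.1.1, fun t h1 h2 => (hw.1.2 t h1 h2).trans (h t h1 h2)⟩, ?_⟩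
  intro w' hw'
  exact hw.2 w' ⟨hw'.1, fun t h1 h2 => (hw'.2 t h1 h2).trans (h t h1 h2).symm⟩



/-- `d_λ(π;x) = Σ c_λ(π';x)` over all `π' ∈ S_n^λ` with
`Y_λ(π') ≤ Y_λ(π)`; in particular `s_λ(x) = Σ_{π' ∈ S_n^λ} c_λ(π';x)`. -/
theorem demazure_eq_sum_atoms (n : ℕ) (hn : 1 ≤ n) (lam : NPartition n)
    (p : ℕ → ℕ) (hp : IsNPerm n p) (w : List ℕ) (hw : IsReducedWord n w p) :
    (applyOps rhoOp w (lamMonomial lam) =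
      ∑ᶠ p' ∈ {p' : ℕ → ℕ | InSnLam lam p' ∧ (∀ t, t = 0 ∨ n < t → p' t = t) ∧
          ∀ j i, InShape lam j i → keyTab lam p' j i ≤ keyTab lam p j i},
        atomPoly lam p') ∧
    ((∑ᶠ T ∈ {T : ℕ → ℕ → ℕ | IsSSYT lam T ∧ ZeroOutside lam T}, weight lam T) =
      ∑ᶠ p' ∈ {p' : ℕ → ℕ | InSnLam lam p' ∧ ∀ t, t = 0 ∨ n < t → p' t = t},
        atomPoly lam p') := by
  constructor
  · have hv : GP n (wp w) := GP_wp hw.1.1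
    have hpv : ∀ t, 1 ≤ t → t ≤ n → p t = wp w t := by
      intro t h1 h2
      rw [← hw.1.2 t h1 h2, permOfWord_eq]
    have hRW := (isReduced_iff hv w).1 (reduced_congr hpv hw)
    rw [demazure_perm lam w _ hRW]
    symm
    apply finsum_bridge
    · rintro q ⟨h1, h2, _⟩
      exact ⟨h1.1, h2⟩
    · intro u hu
      rw [Set.mem_setOf_eq, inSnLam_iff lam hu, keyTab_congr lam hpv, key_le_iff]
      exact ⟨fun h => ⟨h.1, h.2.2⟩, fun h => ⟨h.1, hu, h.2⟩⟩
  · have h1 : (∑ᶠ T ∈ {T : ℕ → ℕ → ℕ | IsSSYT lam T ∧ ZeroOutside lam T}, weight lam T)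
        = Sch lam :=
      finsum_mem_eq_finite_toFinset_sum _ (tab_finite lam)
    rw [h1, ← FS_eq_Sch, FS]
    symm
    apply finsum_bridge
    · rintro q ⟨h1, h2⟩
      exact ⟨h1.1, h2⟩
    · intro u hu
      rw [Set.mem_setOf_eq, inSnLam_iff lam hu]
      exact ⟨fun h => h.1, fun h => ⟨h, hu⟩⟩

end KeyPoly
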